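/- arXiv:1503.06778 — 4 statements merged into one kernel-verified Lean document; each statement's English description precedes it below -/
import Mathlib

section
/- Let 1 < p < ∞ and 1/p + 1/p' = 1. Suppose the two testing conditions hold: (i) for every J ∈ 𝓛, ∫_J (Σ_{I ∈ 𝓛, I ⊆ J} α_I · 1_I)^p dν ≤ C₁^p · μ(J), and (ii) for every J ∈ 𝓛, ∫_J (Σ_{I ∈ 𝓛, I ⊆ J} α_I · (ν(I)/μ(I)) · 1_I)^{p'} dμ ≤ C₂^{p'} · ν(J). Then the operator T_α f := Σ_{I ∈ 𝓛} α_I · E_I^μ f is bounded from L^p(μ) to L^p(ν), with operator norm at most an absolute constant (depending only on p) times C₁ + C₂. -/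
open MeasureTheory ENNReal NNReal Set Filter

/-- A lattice of measurable sets on a measurable space `X`: a union of countable
generations, each generation being a countable disjoint cover of `X`, and each set of
generation `n` being a (countable) disjoint union of sets of generation `n+1`. -/
structure LatticeFamily (X : Type*) [MeasurableSpace X] where
  gen : ℤ → Set (Set X)
  countable : ∀ n, (gen n).Countable
  meas : ∀ n, ∀ I ∈ gen n, MeasurableSet I
  pairwiseDisjoint : ∀ n, (gen n).PairwiseDisjoint id
  cover : ∀ n, ⋃₀ gen n = univ
  subdiv : ∀ n, ∀ I ∈ gen n, ∃ S ⊆ gen (n + 1), I = ⋃₀ S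

/-- The collection of all sets of the lattice. -/
def LatticeFamily.sets {X : Type*} [MeasurableSpace X] (L : LatticeFamily X) : Set (Set X) :=
  ⋃ n, L.gen n

/-- The averaging operator `E_I^μ f = (μ(I)⁻¹ ∫_I f dμ) · 1_I`. -/
noncomputable def avgOp {X : Type*} [MeasurableSpace X] (μ : Measure X) (I : Set X)
    (f : X → ℝ≥0∞) : X → ℝ≥0∞ :=
  I.indicator fun _ => (∫⁻ y in I, f y ∂μ) / μ I

/-- The lattice maximal function `M_μ f(x) = sup {E_I^μ f(x) : I ∈ 𝓛, x ∈ I}`. -/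
noncomputable def maxOp {X : Type*} [MeasurableSpace X] (L : LatticeFamily X) (μ : Measure X)
    (f : X → ℝ≥0∞) : X → ℝ≥0∞ := fun x =>
  ⨆ (I : Set X) (_ : I ∈ L.sets ∧ x ∈ I), (∫⁻ y in I, f y ∂μ) / μ I

/-!
Restrict the sum to a finite subfamily `A` and test `T f` against a function `g`: the claim becomes
a bound for the bilinear form `∑ I ∈ A, α I * ⨍_I f dμ * ∫_I g dν` by `‖f‖_{L^p(μ)} ‖g‖_{L^q(ν)}`.
Choose stopping sets along which the averages of `f` double, and let the corona of a stopping set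
`F` consist of the sets whose smallest stopping superset is `F`. On the corona the averages of `f`
are at most `2 ⨍_F f`, and replacing `g` by its average on each child of `F` does not change its
integrals over corona sets; Hölder's inequality and the first testing condition on `F` then control
the corona. Summing over `F`, the factor coming from `f` is bounded by the Carleson embedding
theorem: at each point the averages over stopping sets form a geometric progression.

The averages of `g` over the stopping sets of `f` need not satisfy a Carleson bound, so `A` is first
split according to which of `(⨍_I f dμ)^p μ(I) / ‖f‖^p` and `(⨍_I g dν)^q ν(I) / ‖g‖^q` is larger.
Where the former is, it dominates the terms coming from `g`; the other part is the same estimate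
with the roles of `(f, μ)` and `(g, ν)` exchanged, which uses the second testing condition. Taking
`g = (T f)^(p-1)` recovers the norm bound, and monotone convergence removes the finiteness of `A`.
-/

namespace TwoWeight

/-- A family of sets is laminar if any two of its members that meet are nested. -/
def IsLaminar {X : Type*} (𝓛 : Set (Set X)) : Prop :=
  ∀ I ∈ 𝓛, ∀ J ∈ 𝓛, (I ∩ J).Nonempty → I ⊆ J ∨ J ⊆ I

lemma IsLaminar.mono {X : Type*} {𝓛 𝓜 : Set (Set X)} (h𝓛 : IsLaminar 𝓛) (h : 𝓜 ⊆ 𝓛) :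
    IsLaminar 𝓜 :=
  fun I hI J hJ ↦ h𝓛 I (h hI) J (h hJ)

lemma sum_rpow_le_of_two_mul_lt {ι : Type*} {s : ℝ} (hs : 0 < s) (S : Finset ι) (a : ι → ℝ≥0∞)
    (hS : (S : Set ι).Pairwise fun i j ↦ 2 * a i < a j ∨ 2 * a j < a i) (t : ℝ≥0∞)
    (ht : ∀ i ∈ S, a i ≤ t) :
    ∑ i ∈ S, a i ^ s ≤ (1 - 2 ^ (-s))⁻¹ * t ^ s := by
  classical
  have hr : (2 : ℝ≥0∞) ^ (-s) < 1 := rpow_lt_one_of_one_lt_of_neg one_lt_two (by simpa using hs)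
  set c : ℝ≥0∞ := (1 - 2 ^ (-s))⁻¹
  have hc_eq : 1 + c * 2 ^ (-s) = c := by
    have h0 : (1 - (2 : ℝ≥0∞) ^ (-s)) ≠ 0 := (tsub_pos_of_lt hr).ne'
    have h1 : c * (1 - 2 ^ (-s)) = 1 := ENNReal.inv_mul_cancel h0 (by finiteness)
    calc 1 + c * 2 ^ (-s) = c * (1 - 2 ^ (-s) + 2 ^ (-s)) := by rw [mul_add, h1]
      _ = c := by rw [tsub_add_cancel_of_le hr.le, mul_one]
  induction S using Finset.induction_on_max_value a generalizing t with
  | empty => simp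
  | insert i S hi hmax ih =>
    rw [Finset.coe_insert, pairwise_insert_of_notMem (by simpa using hi)] at hS
    have hhalf : ∀ j ∈ S, a j ≤ a i / 2 := by
      intro j hj
      have hlt : 2 * a j < a i := (hS.2 j hj).1.resolve_left fun h ↦
        (h.trans_le (hmax j hj)).not_ge (le_mul_of_one_le_left' one_le_two)
      rw [ENNReal.le_div_iff_mul_le (by simp) (by simp), mul_comm]
      exact hlt.le
    calc ∑ j ∈ insert i S, a j ^ s = a i ^ s + ∑ j ∈ S, a j ^ s := Finset.sum_insert hi
      _ ≤ a i ^ s + c * (a i / 2) ^ s := by gcongr; exact ih hS.1 _ hhalf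
      _ = (1 + c * 2 ^ (-s)) * a i ^ s := by
        rw [div_rpow_of_nonneg _ _ hs.le, div_eq_mul_inv, ← ENNReal.rpow_neg]; ring
      _ ≤ c * t ^ s := by
        rw [hc_eq]; gcongr; exact ht i (Finset.mem_insert_self i S)

section StoppingFamily

variable {X : Type*} {a : Set X → ℝ≥0∞} {A 𝓕 : Finset (Set X)} {F G I : Set X}

/-- A stopping family for `a` in `A` (the principal sets of Muckenhoupt and Wheeden): `a` more than
doubles from a stopping set to a strictly smaller one, while every member of `A` lies in a stopping
set on which `a` is at least half as large. -/
structure IsStoppingFamily (a : Set X → ℝ≥0∞) (A 𝓕 : Finset (Set X)) : Prop where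
  subset : 𝓕 ⊆ A
  two_mul_lt : ∀ F ∈ 𝓕, ∀ G ∈ 𝓕, G ⊂ F → 2 * a F < a G
  exists_le : ∀ I ∈ A, ∃ F ∈ 𝓕, I ⊆ F ∧ a I ≤ 2 * a F

lemma exists_isStoppingFamily (a : Set X → ℝ≥0∞) (A : Finset (Set X)) :
    ∃ 𝓕, IsStoppingFamily a A 𝓕 := by
  classical
  induction A using Finset.strongInduction with
  | H A ih =>
  obtain rfl | hA := A.eq_empty_or_nonempty
  · exact ⟨∅, by simp, by simp, by simp⟩
  obtain ⟨M, hM⟩ := A.exists_minimal hA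
  obtain ⟨𝓕, h𝓕⟩ := ih _ (Finset.erase_ssubset hM.prop)
  have hsub : 𝓕 ⊆ A := h𝓕.subset.trans (A.erase_subset M)
  by_cases hcov : ∃ F ∈ 𝓕, M ⊆ F ∧ a M ≤ 2 * a F
  · refine ⟨𝓕, hsub, h𝓕.two_mul_lt, fun I hI ↦ ?_⟩
    obtain rfl | hIM := eq_or_ne I M
    · exact hcov
    · exact h𝓕.exists_le I (Finset.mem_erase.2 ⟨hIM, hI⟩)
  · push Not at hcov
    refine ⟨insert M 𝓕, Finset.insert_subset hM.prop hsub, fun F hF G hG hGF ↦ ?_, fun I hI ↦ ?_⟩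
    · have hFM : F ≠ M := by
        rintro rfl
        exact hM.not_lt ((Finset.insert_subset hM.prop hsub) hG) hGF
      have hF𝓕 := Finset.mem_of_mem_insert_of_ne hF hFM
      obtain rfl | hG𝓕 := Finset.mem_insert.1 hG
      · exact hcov F hF𝓕 hGF.subset
      · exact h𝓕.two_mul_lt F hF𝓕 G hG𝓕 hGF
    · obtain rfl | hIM := eq_or_ne I M
      · exact ⟨I, Finset.mem_insert_self I 𝓕, Subset.rfl, le_mul_of_one_le_left' one_le_two⟩
      · obtain ⟨F, hF, hIF⟩ := h𝓕.exists_le I (Finset.mem_erase.2 ⟨hIM, hI⟩)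
        exact ⟨F, Finset.mem_insert_of_mem hF, hIF⟩

open scoped Classical in
/-- The corona of `F`: the members of `A` whose smallest superset in `𝓕` is `F`. -/
noncomputable def corona (𝓕 A : Finset (Set X)) (F : Set X) : Finset (Set X) :=
  {I ∈ A | I ⊆ F ∧ ∀ G ∈ 𝓕, I ⊆ G → F ⊆ G}

open scoped Classical in
/-- The children of `F` in `𝓕`: the members of `𝓕` whose smallest strict superset in `𝓕` is `F`. -/
noncomputable def children (𝓕 : Finset (Set X)) (F : Set X) : Finset (Set X) :=
  {G ∈ 𝓕 | G ⊂ F ∧ ∀ H ∈ 𝓕, G ⊂ H → F ⊆ H}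

lemma mem_corona : I ∈ corona 𝓕 A F ↔ I ∈ A ∧ I ⊆ F ∧ ∀ G ∈ 𝓕, I ⊆ G → F ⊆ G := by
  simp [corona]

lemma mem_children : G ∈ children 𝓕 F ↔ G ∈ 𝓕 ∧ G ⊂ F ∧ ∀ H ∈ 𝓕, G ⊂ H → F ⊆ H := by
  simp [children]

lemma IsStoppingFamily.le_two_mul_of_mem_corona (h : IsStoppingFamily a A 𝓕) (hF : F ∈ 𝓕)
    (hI : I ∈ corona 𝓕 A F) : a I ≤ 2 * a F := by
  obtain ⟨hIA, -, hmin⟩ := mem_corona.1 hI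
  obtain ⟨G, hG, hIG, haG⟩ := h.exists_le I hIA
  obtain rfl | hFG := (hmin G hG hIG).eq_or_ssubset
  · exact haG
  · calc a I ≤ 2 * a G := haG
      _ ≤ a F := (h.two_mul_lt G hG F hF hFG).le
      _ ≤ 2 * a F := le_mul_of_one_le_left' one_le_two

lemma pairwiseDisjoint_corona (𝓕 A : Finset (Set X)) :
    (𝓕 : Set (Set X)).PairwiseDisjoint (corona 𝓕 A) := by
  refine fun F hF G hG hFG ↦ Finset.disjoint_left.2 fun I hIF hIG ↦ hFG ?_
  obtain ⟨-, hF', hFmin⟩ := mem_corona.1 hIF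
  obtain ⟨-, hG', hGmin⟩ := mem_corona.1 hIG
  exact (hFmin G hG hG').antisymm (hGmin F hF hF')

lemma pairwiseDisjoint_children (𝓕 : Finset (Set X)) :
    (𝓕 : Set (Set X)).PairwiseDisjoint (children 𝓕) := by
  refine fun F hF G hG hFG ↦ Finset.disjoint_left.2 fun H hHF hHG ↦ hFG ?_
  obtain ⟨-, hF', hFmin⟩ := mem_children.1 hHF
  obtain ⟨-, hG', hGmin⟩ := mem_children.1 hHG
  exact (hFmin G hG hG').antisymm (hGmin F hF hF')

lemma sum_sum_children_le (𝓕 : Finset (Set X)) (u : Set X → ℝ≥0∞) :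
    ∑ F ∈ 𝓕, ∑ G ∈ children 𝓕 F, u G ≤ ∑ G ∈ 𝓕, u G := by
  classical
  rw [← Finset.sum_biUnion (pairwiseDisjoint_children 𝓕)]
  exact Finset.sum_le_sum_of_subset
    (Finset.biUnion_subset.2 fun F _ G hG ↦ (mem_children.1 hG).1)

lemma exists_mem_corona (h𝓕 : IsLaminar (𝓕 : Set (Set X))) (hIA : I ∈ A) (hI : I.Nonempty)
    (hcov : ∃ F ∈ 𝓕, I ⊆ F) : ∃ F ∈ 𝓕, I ∈ corona 𝓕 A F := by
  classical
  obtain ⟨F₀, hF₀, hIF₀⟩ := hcov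
  obtain ⟨F, hF⟩ := Finset.exists_minimal (s := {F ∈ 𝓕 | I ⊆ F}) ⟨F₀, by simp [hF₀, hIF₀]⟩
  obtain ⟨hF𝓕, hIF⟩ := Finset.mem_filter.1 hF.prop
  refine ⟨F, hF𝓕, mem_corona.2 ⟨hIA, hIF, fun G hG hIG ↦ ?_⟩⟩
  obtain hFG | hGF := h𝓕 F hF𝓕 G hG (hI.mono (subset_inter hIF hIG))
  · exact hFG
  · exact hF.le_of_le (Finset.mem_filter.2 ⟨hG, hIG⟩) hGF

lemma IsStoppingFamily.sum_corona {M : Type*} [AddCommMonoid M] (h : IsStoppingFamily a A 𝓕)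
    (hA : IsLaminar (A : Set (Set X))) (hne : ∅ ∉ A) (u : Set X → M) :
    ∑ F ∈ 𝓕, ∑ I ∈ corona 𝓕 A F, u I = ∑ I ∈ A, u I := by
  classical
  rw [← Finset.sum_biUnion (pairwiseDisjoint_corona 𝓕 A)]
  refine Finset.sum_congr (Finset.ext fun I ↦ ⟨fun hI ↦ ?_, fun hI ↦ ?_⟩) fun _ _ ↦ rfl
  · obtain ⟨F, -, hIF⟩ := Finset.mem_biUnion.1 hI
    exact (mem_corona.1 hIF).1
  · obtain ⟨F, hF, hIF, -⟩ := h.exists_le I hI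
    have hI₀ : I.Nonempty := nonempty_iff_ne_empty.2 fun h₀ ↦ hne (h₀ ▸ hI)
    exact Finset.mem_biUnion.2
      (exists_mem_corona (hA.mono (by exact_mod_cast h.subset)) hI hI₀ ⟨F, hF, hIF⟩)

lemma subset_or_disjoint_of_mem_children (hA : IsLaminar (A : Set (Set X))) (h𝓕 : 𝓕 ⊆ A)
    (hI : I ∈ corona 𝓕 A F) (hG : G ∈ children 𝓕 F) : G ⊆ I ∨ Disjoint G I := by
  obtain ⟨hIA, -, hmin⟩ := mem_corona.1 hI
  obtain ⟨hG𝓕, hGF, -⟩ := mem_children.1 hG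
  by_cases hGI : (G ∩ I).Nonempty
  · exact .inl ((hA G (h𝓕 hG𝓕) I hIA hGI).resolve_right fun h ↦ hGF.not_subset (hmin G hG𝓕 h))
  · exact .inr (disjoint_iff_inter_eq_empty.2 (not_nonempty_iff_eq_empty.1 hGI))

lemma pairwiseDisjoint_id_children (h𝓕 : IsLaminar (𝓕 : Set (Set X))) (F : Set X) :
    (children 𝓕 F : Set (Set X)).PairwiseDisjoint id := by
  intro G hG H hH hGH
  obtain ⟨hG𝓕, hGF, hGmin⟩ := mem_children.1 hG
  obtain ⟨hH𝓕, hHF, hHmin⟩ := mem_children.1 hH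
  refine not_not.1 fun hmeet ↦ ?_
  obtain h | h := h𝓕 G hG𝓕 H hH𝓕 (not_disjoint_iff_nonempty_inter.1 hmeet)
  · exact hHF.not_subset (hGmin H hH𝓕 (h.ssubset_of_ne hGH))
  · exact hGF.not_subset (hHmin G hG𝓕 (h.ssubset_of_ne hGH.symm))

lemma exists_mem_children_superset (h𝓕 : IsLaminar (𝓕 : Set (Set X))) (hF : F ∈ 𝓕) (hG : G ∈ 𝓕)
    (hG₀ : G.Nonempty) (hGF : G ⊂ F) : ∃ H ∈ children 𝓕 F, G ⊆ H := by
  classical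
  obtain ⟨H, hGH, hH⟩ := ({H ∈ 𝓕 | H ⊂ F} : Finset (Set X)).exists_le_maximal
    (Finset.mem_filter.2 ⟨hG, hGF⟩)
  obtain ⟨hH𝓕, hHF⟩ := Finset.mem_filter.1 hH.prop
  refine ⟨H, mem_children.2 ⟨hH𝓕, hHF, fun K hK hHK ↦ ?_⟩, hGH⟩
  obtain h | h := h𝓕 F hF K hK (hG₀.mono (subset_inter hGF.subset (hGH.trans hHK.subset)))
  · exact h
  · by_contra hFK
    exact hHK.not_subset (hH.le_of_ge (Finset.mem_filter.2 ⟨hK, h.ssubset_of_not_subset hFK⟩)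
      hHK.subset)

lemma pairwiseDisjoint_diff_children (h𝓕 : IsLaminar (𝓕 : Set (Set X))) :
    (𝓕 : Set (Set X)).PairwiseDisjoint fun F ↦ F \ ⋃ G ∈ children 𝓕 F, G := by
  have key : ∀ F ∈ 𝓕, ∀ G ∈ 𝓕, G ⊂ F → ∀ x ∈ G, x ∈ ⋃ H ∈ children 𝓕 F, H := by
    intro F hF G hG hGF x hx
    obtain ⟨H, hH, hGH⟩ := exists_mem_children_superset h𝓕 hF hG ⟨x, hx⟩ hGF
    exact mem_biUnion hH (hGH hx)
  refine fun F hF G hG hFG ↦ Set.disjoint_left.2 fun x hxF hxG ↦ ?_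
  obtain h | h := h𝓕 F hF G hG ⟨x, hxF.1, hxG.1⟩
  · exact hxG.2 (key G hG F hF (h.ssubset_of_ne hFG) x hxF.1)
  · exact hxF.2 (key F hF G hG (h.ssubset_of_ne hFG.symm) x hxG.1)

lemma IsStoppingFamily.pairwise_two_mul_lt (h : IsStoppingFamily a A 𝓕)
    (h𝓕 : IsLaminar (𝓕 : Set (Set X))) (x : X) :
    {F | F ∈ 𝓕 ∧ x ∈ F}.Pairwise fun F G ↦ 2 * a F < a G ∨ 2 * a G < a F := by
  intro F ⟨hF, hxF⟩ G ⟨hG, hxG⟩ hFG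
  obtain hsub | hsub := h𝓕 F hF G hG ⟨x, hxF, hxG⟩
  · exact .inr (h.two_mul_lt G hG F hF (hsub.ssubset_of_ne hFG))
  · exact .inl (h.two_mul_lt F hF G hG (hsub.ssubset_of_ne hFG.symm))

end StoppingFamily

section Carleson

variable {X : Type*} {f : X → ℝ≥0∞} {p : ℝ}

/-- The constant of the Carleson embedding theorem for stopping families: `(1 - 2 ^ (-(p - 1)))⁻¹`
is the sum of the geometric series with ratio `2 ^ (-(p - 1))`. -/
noncomputable def carlesonConst (p : ℝ) : ℝ≥0∞ := 2 ^ p * (1 - 2 ^ (-(p - 1)))⁻¹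

lemma carlesonConst_ne_zero (p : ℝ) : carlesonConst p ≠ 0 :=
  mul_ne_zero (by simp) (ENNReal.inv_ne_zero.2 (by finiteness))

lemma carlesonConst_ne_top (hp : 1 < p) : carlesonConst p ≠ ∞ := by
  have h : (2 : ℝ≥0∞) ^ (-(p - 1)) < 1 :=
    rpow_lt_one_of_one_lt_of_neg one_lt_two (by linarith)
  exact ENNReal.mul_ne_top (by finiteness) (ENNReal.inv_ne_top.2 (tsub_pos_of_lt h).ne')

lemma rpow_sub_one_mul_self (hp : 1 ≤ p) (y : ℝ≥0∞) : y ^ (p - 1) * y = y ^ p := by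
  simpa using (ENNReal.rpow_add_of_nonneg (x := y) (p - 1) 1 (by linarith) zero_le_one).symm

lemma sum_indicator_rpow_mul_le (hp : 1 < p) (𝓕 : Finset (Set X)) (a : Set X → ℝ≥0∞) (x : X)
    (hdouble : {F | F ∈ 𝓕 ∧ x ∈ F}.Pairwise fun F G ↦ 2 * a F < a G ∨ 2 * a G < a F) :
    2 * ∑ F ∈ 𝓕, (F ∩ {x | a F < 2 * f x}).indicator (fun x ↦ a F ^ (p - 1) * f x) x ≤
      carlesonConst p * f x ^ p := by
  classical
  have hp' : 0 < p - 1 := by linarith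
  have hgeom := sum_rpow_le_of_two_mul_lt hp' {F ∈ 𝓕 | x ∈ F ∩ {x | a F < 2 * f x}} a
    (hdouble.mono fun F hF ↦ by simp_all) (2 * f x) fun F hF ↦ by simp_all [le_of_lt]
  calc 2 * ∑ F ∈ 𝓕, (F ∩ {x | a F < 2 * f x}).indicator (fun x ↦ a F ^ (p - 1) * f x) x
      = (∑ F ∈ 𝓕 with x ∈ F ∩ {x | a F < 2 * f x}, a F ^ (p - 1)) * (2 * f x) := by
        rw [Finset.sum_mul, Finset.sum_filter, Finset.mul_sum]
        refine Finset.sum_congr rfl fun F _ ↦ ?_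
        rw [indicator_apply]
        split_ifs <;> ring
    _ ≤ (1 - 2 ^ (-(p - 1)))⁻¹ * (2 * f x) ^ (p - 1) * (2 * f x) := by gcongr
    _ = carlesonConst p * f x ^ p := by
      rw [mul_assoc, rpow_sub_one_mul_self hp.le, mul_rpow_of_nonneg _ _ (by linarith),
        carlesonConst]
      ring

variable [MeasurableSpace X] {μ : Measure X}

lemma setLIntegral_ne_top_of_lintegral_rpow_ne_top {F : Set X} (hp : 1 ≤ p)
    (hf : ∫⁻ x, f x ^ p ∂μ ≠ ∞) (hF : μ F ≠ ∞) : ∫⁻ x in F, f x ∂μ ≠ ∞ := by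
  have hle : ∀ y : ℝ≥0∞, y ≤ 1 + y ^ p := by
    intro y
    obtain hy | hy := le_total y 1
    · exact hy.trans le_self_add
    · exact (ENNReal.le_rpow_self_of_one_le hy hp).trans le_add_self
  refine ne_top_of_le_ne_top (ENNReal.add_ne_top.2 ⟨hF, hf⟩) ?_
  calc ∫⁻ x in F, f x ∂μ ≤ ∫⁻ x in F, (1 + f x ^ p) ∂μ := lintegral_mono fun x ↦ hle (f x)
    _ = μ F + ∫⁻ x in F, f x ^ p ∂μ := by
      rw [lintegral_add_left measurable_const, setLIntegral_one]
    _ ≤ μ F + ∫⁻ x, f x ^ p ∂μ := by gcongr; exact Measure.restrict_le_self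

lemma lintegral_le_two_mul_lintegral_indicator_laverage_lt [IsFiniteMeasure μ]
    (hfin : ∫⁻ x, f x ∂μ ≠ ∞) :
    ∫⁻ x, f x ∂μ ≤ 2 * ∫⁻ x, {x | ⨍⁻ y, f y ∂μ < 2 * f x}.indicator f x ∂μ := by
  set m := ⨍⁻ y, f y ∂μ with hm
  set N := ∫⁻ x, {x | m < 2 * f x}.indicator f x ∂μ
  have hle : ∀ x, f x ≤ {x | m < 2 * f x}.indicator f x + m / 2 := by
    intro x
    by_cases hx : m < 2 * f x
    · rw [indicator_of_mem (show x ∈ {x | m < 2 * f x} from hx)]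
      exact le_self_add
    · refine le_add_left ?_
      rw [ENNReal.le_div_iff_mul_le (by simp) (by simp), mul_comm]
      exact not_lt.1 hx
  have hsplit : ∫⁻ x, f x ∂μ ≤ N + (∫⁻ x, f x ∂μ) / 2 := by
    calc ∫⁻ x, f x ∂μ ≤ ∫⁻ x, ({x | m < 2 * f x}.indicator f x + m / 2) ∂μ := lintegral_mono hle
      _ = N + m / 2 * μ univ := by rw [lintegral_add_right _ measurable_const, lintegral_const]
      _ = N + (∫⁻ x, f x ∂μ) / 2 := by
        rw [← measure_mul_laverage μ f, ← hm, div_eq_mul_inv, div_eq_mul_inv]; ring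
  have hhalf : (∫⁻ x, f x ∂μ) / 2 ≤ N := by
    refine (ENNReal.add_le_add_iff_right (ENNReal.div_ne_top hfin two_ne_zero)).1 ?_
    rwa [ENNReal.add_halves]
  rwa [ENNReal.div_le_iff (by simp) (by simp), mul_comm] at hhalf

lemma setLAverage_rpow_mul_measure_le {F : Set X} (hp : 1 ≤ p) (hf : Measurable f)
    (hfin : ∫⁻ x, f x ^ p ∂μ ≠ ∞) (hFm : MeasurableSet F) (hF : μ F ≠ ∞) :
    (⨍⁻ y in F, f y ∂μ) ^ p * μ F ≤
      2 * ∫⁻ x, (F ∩ {x | ⨍⁻ y in F, f y ∂μ < 2 * f x}).indicator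
        (fun x ↦ (⨍⁻ y in F, f y ∂μ) ^ (p - 1) * f x) x ∂μ := by
  have : IsFiniteMeasure (μ.restrict F) := isFiniteMeasure_restrict.2 hF
  have htrunc := lintegral_le_two_mul_lintegral_indicator_laverage_lt (μ := μ.restrict F)
    (setLIntegral_ne_top_of_lintegral_rpow_ne_top hp hfin hF)
  set m := ⨍⁻ y in F, f y ∂μ with hm
  have hE : MeasurableSet {x | m < 2 * f x} := measurableSet_lt measurable_const (hf.const_mul 2)
  calc m ^ p * μ F = m ^ (p - 1) * (μ F * m) := by rw [← rpow_sub_one_mul_self hp]; ring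
    _ = m ^ (p - 1) * ∫⁻ x in F, f x ∂μ := by rw [hm, measure_mul_setLAverage f hF]
    _ ≤ m ^ (p - 1) * (2 * ∫⁻ x in F, {x | m < 2 * f x}.indicator f x ∂μ) := by gcongr
    _ = 2 * ∫⁻ x, (F ∩ {x | m < 2 * f x}).indicator (fun x ↦ m ^ (p - 1) * f x) x ∂μ := by
      rw [lintegral_indicator (hFm.inter hE), lintegral_const_mul _ hf,
        setLIntegral_indicator hE, inter_comm]
      ring

lemma sum_setLAverage_rpow_mul_measure_le (hp : 1 < p) (hf : Measurable f) (𝓕 : Finset (Set X))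
    (h𝓕 : ∀ F ∈ 𝓕, MeasurableSet F) (hμ : ∀ F ∈ 𝓕, μ F ≠ ∞)
    (hdouble : ∀ x, {F | F ∈ 𝓕 ∧ x ∈ F}.Pairwise fun F G ↦
      2 * ⨍⁻ y in F, f y ∂μ < ⨍⁻ y in G, f y ∂μ ∨ 2 * ⨍⁻ y in G, f y ∂μ < ⨍⁻ y in F, f y ∂μ) :
    ∑ F ∈ 𝓕, (⨍⁻ y in F, f y ∂μ) ^ p * μ F ≤ carlesonConst p * ∫⁻ x, f x ^ p ∂μ := by
  by_cases hfin : ∫⁻ x, f x ^ p ∂μ = ∞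
  · rw [hfin, mul_top (carlesonConst_ne_zero p)]
    exact le_top
  set a : Set X → ℝ≥0∞ := fun F ↦ ⨍⁻ y in F, f y ∂μ
  set h : Set X → X → ℝ≥0∞ := fun F ↦
    (F ∩ {x | a F < 2 * f x}).indicator fun x ↦ a F ^ (p - 1) * f x
  have hh : ∀ F ∈ 𝓕, Measurable (h F) := fun F hF ↦ (hf.const_mul _).indicator
    ((h𝓕 F hF).inter (measurableSet_lt measurable_const (hf.const_mul 2)))
  calc ∑ F ∈ 𝓕, a F ^ p * μ F ≤ ∑ F ∈ 𝓕, 2 * ∫⁻ x, h F x ∂μ := Finset.sum_le_sum fun F hF ↦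
        setLAverage_rpow_mul_measure_le hp.le hf hfin (h𝓕 F hF) (hμ F hF)
    _ = ∫⁻ x, 2 * ∑ F ∈ 𝓕, h F x ∂μ := by
      rw [← Finset.mul_sum, ← lintegral_finsetSum _ hh,
        lintegral_const_mul _ (Finset.measurable_fun_sum _ hh)]
    _ ≤ ∫⁻ x, carlesonConst p * f x ^ p ∂μ :=
      lintegral_mono fun x ↦ sum_indicator_rpow_mul_le hp 𝓕 a x (hdouble x)
    _ = carlesonConst p * ∫⁻ x, f x ^ p ∂μ := lintegral_const_mul _ (hf.pow_const p)

end Carleson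

section Averaging

variable {X : Type*}

/-- The weighted sum of indicators `∑ I ∈ A, w I • 1_I`. -/
noncomputable def indicatorSum (A : Finset (Set X)) (w : Set X → ℝ≥0∞) (x : X) : ℝ≥0∞ :=
  ∑ I ∈ A, w I * I.indicator 1 x

lemma indicatorSum_map_subtype {𝓛 : Set (Set X)} (s : Finset 𝓛) (w : Set X → ℝ≥0∞) (x : X) :
    indicatorSum (s.map (Function.Embedding.subtype _)) w x =
      ∑ I ∈ s, w I.1 * I.1.indicator 1 x := by
  simp [indicatorSum]

variable [MeasurableSpace X] {ν : Measure X} {D : Finset (Set X)} {g : X → ℝ≥0∞}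

lemma measurable_indicatorSum {A : Finset (Set X)} (hA : ∀ I ∈ A, MeasurableSet I)
    (w : Set X → ℝ≥0∞) : Measurable (indicatorSum A w) :=
  Finset.measurable_fun_sum _ fun I hI ↦ (measurable_one.indicator (hA I hI)).const_mul (w I)

lemma lintegral_indicatorSum_mul {A : Finset (Set X)} (hA : ∀ I ∈ A, MeasurableSet I)
    (w : Set X → ℝ≥0∞) (hg : Measurable g) :
    ∫⁻ x, indicatorSum A w x * g x ∂ν = ∑ I ∈ A, w I * ∫⁻ x in I, g x ∂ν := by
  calc ∫⁻ x, indicatorSum A w x * g x ∂ν = ∫⁻ x, ∑ I ∈ A, w I * I.indicator g x ∂ν := by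
        refine lintegral_congr fun x ↦ ?_
        rw [indicatorSum, Finset.sum_mul]
        refine Finset.sum_congr rfl fun I _ ↦ ?_
        by_cases hx : x ∈ I <;> simp [hx]
    _ = ∑ I ∈ A, w I * ∫⁻ x in I, g x ∂ν := by
      rw [lintegral_finsetSum _ fun I hI ↦ (hg.indicator (hA I hI)).const_mul (w I)]
      refine Finset.sum_congr rfl fun I hI ↦ ?_
      rw [lintegral_const_mul _ (hg.indicator (hA I hI)), lintegral_indicator (hA I hI)]

/-- The function obtained from `g` by replacing it on each member of `D` by its `ν`-average there;
the members of `D` are meant to be pairwise disjoint. -/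
noncomputable def averageOver (ν : Measure X) (D : Finset (Set X)) (g : X → ℝ≥0∞) (x : X) : ℝ≥0∞ :=
  (⋃ G ∈ D, G)ᶜ.indicator g x + ∑ G ∈ D, G.indicator (fun _ ↦ ⨍⁻ y in G, g y ∂ν) x

lemma averageOver_of_mem (hD : (D : Set (Set X)).PairwiseDisjoint id) {G : Set X} (hG : G ∈ D)
    {x : X} (hx : x ∈ G) : averageOver ν D g x = ⨍⁻ y in G, g y ∂ν := by
  have hxD : x ∈ ⋃ G ∈ D, G := mem_iUnion₂.2 ⟨G, hG, hx⟩
  rw [averageOver, indicator_of_notMem (notMem_compl_iff.2 hxD), zero_add,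
    Finset.sum_eq_single_of_mem G hG, indicator_of_mem hx]
  intro H hH hHG
  exact indicator_of_notMem (fun hxH ↦ hHG (hD.elim_set hH hG x hxH hx)) _

lemma averageOver_of_notMem {x : X} (hx : x ∉ ⋃ G ∈ D, G) : averageOver ν D g x = g x := by
  rw [averageOver, indicator_of_mem (mem_compl hx), Finset.sum_eq_zero, add_zero]
  exact fun G hG ↦ indicator_of_notMem (fun hxG ↦ hx (mem_iUnion₂.2 ⟨G, hG, hxG⟩)) _

lemma measurable_averageOver (hDm : ∀ G ∈ D, MeasurableSet G) (hg : Measurable g) :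
    Measurable (averageOver ν D g) :=
  (hg.indicator (D.measurableSet_biUnion hDm).compl).add
    (Finset.measurable_fun_sum _ fun G hG ↦ measurable_const.indicator (hDm G hG))

lemma setLIntegral_eq_diff_add_sum (hD : (D : Set (Set X)).PairwiseDisjoint id)
    (hDm : ∀ G ∈ D, MeasurableSet G) {E : Set X} (hE : MeasurableSet E) (h : X → ℝ≥0∞) :
    ∫⁻ x in E, h x ∂ν = ∫⁻ x in E \ ⋃ G ∈ D, G, h x ∂ν + ∑ G ∈ D, ∫⁻ x in E ∩ G, h x ∂ν := by
  have hED : (D : Set (Set X)).PairwiseDisjoint fun G ↦ E ∩ G :=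
    hD.mono fun G ↦ inter_subset_right
  rw [← lintegral_inter_add_sdiff h E (D.measurableSet_biUnion hDm), add_comm, inter_iUnion₂,
    lintegral_biUnion_finset hED fun G hG ↦ hE.inter (hDm G hG)]

lemma setLIntegral_diff_averageOver (hDm : ∀ G ∈ D, MeasurableSet G) {E : Set X}
    (hE : MeasurableSet E) (q : ℝ) :
    ∫⁻ x in E \ ⋃ G ∈ D, G, averageOver ν D g x ^ q ∂ν = ∫⁻ x in E \ ⋃ G ∈ D, G, g x ^ q ∂ν :=
  setLIntegral_congr_fun (hE.diff (D.measurableSet_biUnion hDm)) fun x hx ↦ by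
    simp only [averageOver_of_notMem hx.2]

lemma setLIntegral_averageOver (hD : (D : Set (Set X)).PairwiseDisjoint id)
    (hDm : ∀ G ∈ D, MeasurableSet G) (hν : ∀ G ∈ D, ν G ≠ ∞) {E : Set X} (hE : MeasurableSet E)
    (hDE : ∀ G ∈ D, G ⊆ E ∨ Disjoint G E) :
    ∫⁻ x in E, averageOver ν D g x ∂ν = ∫⁻ x in E, g x ∂ν := by
  have hdiff := setLIntegral_diff_averageOver (ν := ν) (g := g) hDm hE 1
  simp only [ENNReal.rpow_one] at hdiff
  rw [setLIntegral_eq_diff_add_sum hD hDm hE, setLIntegral_eq_diff_add_sum hD hDm hE g, hdiff]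
  congr 1
  refine Finset.sum_congr rfl fun G hG ↦ ?_
  obtain hGE | hGE := hDE G hG
  · rw [inter_eq_right.2 hGE, ← measure_mul_setLAverage g (hν G hG),
      setLIntegral_congr_fun (hDm G hG) fun x hx ↦ averageOver_of_mem hD hG hx,
      setLIntegral_const, mul_comm]
  · simp [hGE.symm.inter_eq]

lemma setLIntegral_averageOver_rpow (hD : (D : Set (Set X)).PairwiseDisjoint id)
    (hDm : ∀ G ∈ D, MeasurableSet G) {F : Set X} (hF : MeasurableSet F) (hDF : ∀ G ∈ D, G ⊆ F)
    (q : ℝ) :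
    ∫⁻ x in F, averageOver ν D g x ^ q ∂ν =
      ∫⁻ x in F \ ⋃ G ∈ D, G, g x ^ q ∂ν + ∑ G ∈ D, (⨍⁻ y in G, g y ∂ν) ^ q * ν G := by
  rw [setLIntegral_eq_diff_add_sum hD hDm hF, setLIntegral_diff_averageOver hDm hF]
  congr 1
  refine Finset.sum_congr rfl fun G hG ↦ ?_
  rw [inter_eq_right.2 (hDF G hG), ← setLIntegral_const]
  exact setLIntegral_congr_fun (hDm G hG) fun x hx ↦ by simp only [averageOver_of_mem hD hG hx]

lemma sum_mul_setLIntegral_le {p q : ℝ} (hpq : p.HolderConjugate q) {B : Finset (Set X)} {F : Set X}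
    (hBm : ∀ I ∈ B, MeasurableSet I) (hBF : ∀ I ∈ B, I ⊆ F)
    (hD : (D : Set (Set X)).PairwiseDisjoint id) (hDm : ∀ G ∈ D, MeasurableSet G)
    (hν : ∀ G ∈ D, ν G ≠ ∞) (hDB : ∀ I ∈ B, ∀ G ∈ D, G ⊆ I ∨ Disjoint G I) (w : Set X → ℝ≥0∞)
    (hg : Measurable g) :
    ∑ I ∈ B, w I * ∫⁻ x in I, g x ∂ν ≤
      (∫⁻ x in F, indicatorSum B w x ^ p ∂ν) ^ (1 / p) *
        (∫⁻ x in F, averageOver ν D g x ^ q ∂ν) ^ (1 / q) := by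
  have hg' := measurable_averageOver (ν := ν) hDm hg
  calc ∑ I ∈ B, w I * ∫⁻ x in I, g x ∂ν
      = ∑ I ∈ B, w I * ∫⁻ x in I, averageOver ν D g x ∂ν.restrict F := by
        refine Finset.sum_congr rfl fun I hI ↦ ?_
        rw [Measure.restrict_restrict_of_subset (hBF I hI),
          setLIntegral_averageOver hD hDm hν (hBm I hI) (hDB I hI)]
    _ = ∫⁻ x in F, indicatorSum B w x * averageOver ν D g x ∂ν :=
      (lintegral_indicatorSum_mul hBm w hg').symm
    _ ≤ _ := ENNReal.lintegral_mul_le_Lp_mul_Lq _ hpq (measurable_indicatorSum hBm w).aemeasurable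
        hg'.aemeasurable

end Averaging

section Testing

variable {X : Type*} [MeasurableSpace X] {μ ν : Measure X} {𝓛 : Set (Set X)} {w : Set X → ℝ≥0∞}
  {p : ℝ} {C : ℝ≥0∞}

/-- The testing condition with constant `C`: for every `J ∈ 𝓛`, the sum of `w I • 1_I` over the
members `I ⊆ J` of `𝓛` has `L^p(ν)`-norm at most `C * μ(J)^(1/p)` on `J`. -/
def TestingBound (𝓛 : Set (Set X)) (w : Set X → ℝ≥0∞) (p : ℝ) (μ ν : Measure X) (C : ℝ≥0∞) :
    Prop :=
  ∀ J ∈ 𝓛, ∫⁻ x in J, (∑' I : {I : Set X // I ∈ 𝓛 ∧ I ⊆ J}, w I.1 * I.1.indicator 1 x) ^ p ∂ν ≤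
    C ^ p * μ J

lemma TestingBound.setLIntegral_indicatorSum_rpow_le (h : TestingBound 𝓛 w p μ ν C) (hp : 0 ≤ p)
    {J : Set X} (hJ : J ∈ 𝓛) {B : Finset (Set X)} (hB : ∀ I ∈ B, I ∈ 𝓛 ∧ I ⊆ J) :
    ∫⁻ x in J, indicatorSum B w x ^ p ∂ν ≤ C ^ p * μ J := by
  refine (lintegral_mono fun x ↦ ?_).trans (h J hJ)
  refine ENNReal.rpow_le_rpow ?_ hp
  rw [indicatorSum, ← Finset.tsum_subtype']
  exact ENNReal.tsum_mono_subtype (fun I ↦ w I * I.indicator 1 x) hB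

lemma TestingBound.rpow_mul_measure_le (h : TestingBound 𝓛 w p μ ν C) (hp : 0 ≤ p) {I : Set X}
    (hI : I ∈ 𝓛) (hIm : MeasurableSet I) : w I ^ p * ν I ≤ C ^ p * μ I := by
  calc w I ^ p * ν I = ∫⁻ x in I, indicatorSum {I} w x ^ p ∂ν := by
        rw [← setLIntegral_const]
        exact setLIntegral_congr_fun hIm fun x hx ↦ by simp [indicatorSum, hx]
    _ ≤ C ^ p * μ I := h.setLIntegral_indicatorSum_rpow_le hp hI (by simpa using hI)

end Testing

section StoppingBound

variable {X : Type*} [MeasurableSpace X] {μ ν : Measure X} {𝓛 : Set (Set X)} {w : Set X → ℝ≥0∞}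
  {p q : ℝ} {C : ℝ≥0∞} {a : Set X → ℝ≥0∞} {A 𝓕 : Finset (Set X)} {g : X → ℝ≥0∞}

lemma sum_setLIntegral_diff_children_le (h𝓕 : IsLaminar (𝓕 : Set (Set X)))
    (hm : ∀ F ∈ 𝓕, MeasurableSet F) (h : X → ℝ≥0∞) :
    ∑ F ∈ 𝓕, ∫⁻ x in F \ ⋃ G ∈ children 𝓕 F, G, h x ∂ν ≤ ∫⁻ x, h x ∂ν := by
  rw [← lintegral_biUnion_finset (pairwiseDisjoint_diff_children h𝓕) fun F hF ↦ (hm F hF).diff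
    (Finset.measurableSet_biUnion _ fun G hG ↦ hm G (mem_children.1 hG).1)]
  exact setLIntegral_le_lintegral _ h

lemma sum_setLIntegral_averageOver_rpow_le (h𝓕 : IsLaminar (𝓕 : Set (Set X)))
    (hm : ∀ F ∈ 𝓕, MeasurableSet F) (q : ℝ) :
    ∑ F ∈ 𝓕, ∫⁻ x in F, averageOver ν (children 𝓕 F) g x ^ q ∂ν ≤
      ∫⁻ x, g x ^ q ∂ν + ∑ F ∈ 𝓕, (⨍⁻ y in F, g y ∂ν) ^ q * ν F := by
  calc ∑ F ∈ 𝓕, ∫⁻ x in F, averageOver ν (children 𝓕 F) g x ^ q ∂ν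
      = ∑ F ∈ 𝓕, (∫⁻ x in F \ ⋃ G ∈ children 𝓕 F, G, g x ^ q ∂ν +
          ∑ G ∈ children 𝓕 F, (⨍⁻ y in G, g y ∂ν) ^ q * ν G) :=
        Finset.sum_congr rfl fun F hF ↦ setLIntegral_averageOver_rpow
          (pairwiseDisjoint_id_children h𝓕 F) (fun G hG ↦ hm G (mem_children.1 hG).1) (hm F hF)
          (fun G hG ↦ (mem_children.1 hG).2.1.subset) q
    _ ≤ _ := by
      rw [Finset.sum_add_distrib]
      exact add_le_add (sum_setLIntegral_diff_children_le h𝓕 hm _) (sum_sum_children_le 𝓕 _)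

lemma IsStoppingFamily.sum_corona_mul_setLIntegral_le (h : IsStoppingFamily a A 𝓕)
    (hpq : p.HolderConjugate q) (hA : IsLaminar (A : Set (Set X))) (hA𝓛 : ↑A ⊆ 𝓛)
    (hm : ∀ I ∈ A, MeasurableSet I) (hν : ∀ I ∈ A, ν I ≠ ∞) (hw : TestingBound 𝓛 w p μ ν C)
    (hg : Measurable g) {F : Set X} (hF : F ∈ 𝓕) :
    ∑ I ∈ corona 𝓕 A F, w I * a I * ∫⁻ x in I, g x ∂ν ≤
      2 * C * (a F * μ F ^ (1 / p) *
        (∫⁻ x in F, averageOver ν (children 𝓕 F) g x ^ q ∂ν) ^ (1 / q)) := by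
  have hp := hpq.pos
  have hchild : ∀ G ∈ children 𝓕 F, G ∈ A := fun G hG ↦ h.subset (mem_children.1 hG).1
  set R := ∫⁻ x in F, averageOver ν (children 𝓕 F) g x ^ q ∂ν
  calc ∑ I ∈ corona 𝓕 A F, w I * a I * ∫⁻ x in I, g x ∂ν
      ≤ ∑ I ∈ corona 𝓕 A F, 2 * a F * (w I * ∫⁻ x in I, g x ∂ν) := by
        refine Finset.sum_le_sum fun I hI ↦ ?_
        rw [mul_comm (w I), mul_assoc]
        gcongr
        exact h.le_two_mul_of_mem_corona hF hI
    _ ≤ 2 * a F * ((∫⁻ x in F, indicatorSum (corona 𝓕 A F) w x ^ p ∂ν) ^ (1 / p) *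
          R ^ (1 / q)) := by
      rw [← Finset.mul_sum]
      gcongr
      exact sum_mul_setLIntegral_le hpq (fun I hI ↦ hm I (mem_corona.1 hI).1)
        (fun I hI ↦ (mem_corona.1 hI).2.1)
        (pairwiseDisjoint_id_children (hA.mono (Finset.coe_subset.2 h.subset)) F)
        (fun G hG ↦ hm G (hchild G hG)) (fun G hG ↦ hν G (hchild G hG))
        (fun I hI G hG ↦ subset_or_disjoint_of_mem_children hA h.subset hI hG) w hg
    _ ≤ 2 * a F * ((C ^ p * μ F) ^ (1 / p) * R ^ (1 / q)) := by
      gcongr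
      exact hw.setLIntegral_indicatorSum_rpow_le hp.le (hA𝓛 (h.subset hF)) fun I hI ↦
        ⟨hA𝓛 (mem_corona.1 hI).1, (mem_corona.1 hI).2.1⟩
    _ = 2 * C * (a F * μ F ^ (1 / p) * R ^ (1 / q)) := by
      rw [mul_rpow_of_nonneg _ _ (by positivity), ← ENNReal.rpow_mul, mul_one_div_cancel hp.ne',
        ENNReal.rpow_one]
      ring

lemma IsStoppingFamily.sum_mul_setLIntegral_le (h : IsStoppingFamily a A 𝓕)
    (hpq : p.HolderConjugate q) (hA : IsLaminar (A : Set (Set X))) (hA𝓛 : ↑A ⊆ 𝓛) (hA₀ : ∅ ∉ A)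
    (hm : ∀ I ∈ A, MeasurableSet I) (hν : ∀ I ∈ A, ν I ≠ ∞) (hw : TestingBound 𝓛 w p μ ν C)
    (hg : Measurable g) :
    ∑ I ∈ A, w I * a I * ∫⁻ x in I, g x ∂ν ≤
      2 * C * ((∑ F ∈ 𝓕, a F ^ p * μ F) ^ (1 / p) *
        (∫⁻ x, g x ^ q ∂ν + ∑ F ∈ 𝓕, (⨍⁻ y in F, g y ∂ν) ^ q * ν F) ^ (1 / q)) := by
  have hp := hpq.pos
  have hq := hpq.symm.pos
  set R : Set X → ℝ≥0∞ := fun F ↦ ∫⁻ x in F, averageOver ν (children 𝓕 F) g x ^ q ∂ν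
  calc ∑ I ∈ A, w I * a I * ∫⁻ x in I, g x ∂ν
      = ∑ F ∈ 𝓕, ∑ I ∈ corona 𝓕 A F, w I * a I * ∫⁻ x in I, g x ∂ν :=
        (h.sum_corona hA hA₀ _).symm
    _ ≤ ∑ F ∈ 𝓕, 2 * C * (a F * μ F ^ (1 / p) * R F ^ (1 / q)) := Finset.sum_le_sum fun F hF ↦
        h.sum_corona_mul_setLIntegral_le hpq hA hA𝓛 hm hν hw hg hF
    _ ≤ 2 * C * ((∑ F ∈ 𝓕, (a F * μ F ^ (1 / p)) ^ p) ^ (1 / p) *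
          (∑ F ∈ 𝓕, (R F ^ (1 / q)) ^ q) ^ (1 / q)) := by
      rw [← Finset.mul_sum]
      gcongr
      exact ENNReal.inner_le_Lp_mul_Lq 𝓕 _ _ hpq
    _ = 2 * C * ((∑ F ∈ 𝓕, a F ^ p * μ F) ^ (1 / p) * (∑ F ∈ 𝓕, R F) ^ (1 / q)) := by
      simp only [mul_rpow_of_nonneg _ _ hp.le, ← ENNReal.rpow_mul, one_div_mul_cancel hp.ne',
        one_div_mul_cancel hq.ne', ENNReal.rpow_one]
    _ ≤ _ := by
      gcongr
      exact sum_setLIntegral_averageOver_rpow_le (hA.mono (Finset.coe_subset.2 h.subset))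
        (fun F hF ↦ hm F (h.subset hF)) q

end StoppingBound

section Bilinear

variable {X : Type*} [MeasurableSpace X] {μ ν : Measure X} {𝓛 : Set (Set X)} {p q : ℝ}
  {A : Finset (Set X)} {f g : X → ℝ≥0∞}

lemma sum_mul_setLIntegral_le_of_dominated {w : Set X → ℝ≥0∞} {C : ℝ≥0∞}
    (hpq : p.HolderConjugate q) (hA : IsLaminar (A : Set (Set X))) (hA𝓛 : ↑A ⊆ 𝓛) (hA₀ : ∅ ∉ A)
    (hm : ∀ I ∈ A, MeasurableSet I) (hμ : ∀ I ∈ A, μ I ≠ ∞) (hν : ∀ I ∈ A, ν I ≠ ∞)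
    (hw : TestingBound 𝓛 w p μ ν C) (hf : Measurable f) (hg : Measurable g)
    (hf₀ : ∫⁻ x, f x ^ p ∂μ ≠ 0) (hf_top : ∫⁻ x, f x ^ p ∂μ ≠ ∞)
    (hdom : ∀ I ∈ A, (∫⁻ x, f x ^ p ∂μ) * ((⨍⁻ y in I, g y ∂ν) ^ q * ν I) ≤
      (∫⁻ x, g x ^ q ∂ν) * ((⨍⁻ y in I, f y ∂μ) ^ p * μ I)) :
    ∑ I ∈ A, w I * (⨍⁻ y in I, f y ∂μ) * ∫⁻ x in I, g x ∂ν ≤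
      2 * (1 + carlesonConst p) * C *
        ((∫⁻ x, f x ^ p ∂μ) ^ (1 / p) * (∫⁻ x, g x ^ q ∂ν) ^ (1 / q)) := by
  have hp := hpq.pos
  have hq := hpq.symm.pos
  set K := carlesonConst p
  set Φ := ∫⁻ x, f x ^ p ∂μ
  set Γ := ∫⁻ x, g x ^ q ∂ν
  set a : Set X → ℝ≥0∞ := fun I ↦ ⨍⁻ y in I, f y ∂μ
  obtain ⟨𝓕, h𝓕⟩ := exists_isStoppingFamily a A
  have hcarleson : ∑ F ∈ 𝓕, a F ^ p * μ F ≤ K * Φ :=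
    sum_setLAverage_rpow_mul_measure_le hpq.lt hf 𝓕 (fun F hF ↦ hm F (h𝓕.subset hF))
      (fun F hF ↦ hμ F (h𝓕.subset hF))
      (h𝓕.pairwise_two_mul_lt (hA.mono (Finset.coe_subset.2 h𝓕.subset)))
  have hdual : ∑ F ∈ 𝓕, (⨍⁻ y in F, g y ∂ν) ^ q * ν F ≤ K * Γ := by
    refine (ENNReal.mul_le_mul_iff_right hf₀ hf_top).1 ?_
    calc Φ * ∑ F ∈ 𝓕, (⨍⁻ y in F, g y ∂ν) ^ q * ν F ≤ ∑ F ∈ 𝓕, Γ * (a F ^ p * μ F) := by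
          rw [Finset.mul_sum]
          exact Finset.sum_le_sum fun F hF ↦ hdom F (h𝓕.subset hF)
      _ ≤ Γ * (K * Φ) := by rw [← Finset.mul_sum]; gcongr
      _ = Φ * (K * Γ) := by ring
  calc ∑ I ∈ A, w I * a I * ∫⁻ x in I, g x ∂ν
      ≤ 2 * C * ((∑ F ∈ 𝓕, a F ^ p * μ F) ^ (1 / p) *
          (Γ + ∑ F ∈ 𝓕, (⨍⁻ y in F, g y ∂ν) ^ q * ν F) ^ (1 / q)) :=
        h𝓕.sum_mul_setLIntegral_le hpq hA hA𝓛 hA₀ hm hν hw hg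
    _ ≤ 2 * C * (((1 + K) * Φ) ^ (1 / p) * ((1 + K) * Γ) ^ (1 / q)) := by
      gcongr
      · exact hcarleson.trans (mul_le_mul_left le_add_self Φ)
      · rw [add_mul, one_mul]
        gcongr
    _ = 2 * C * ((1 + K) ^ (1 / p + 1 / q) * (Φ ^ (1 / p) * Γ ^ (1 / q))) := by
      rw [mul_rpow_of_nonneg _ _ (by positivity), mul_rpow_of_nonneg _ _ (by positivity),
        ENNReal.rpow_add_of_nonneg _ _ (by positivity) (by positivity)]
      ring
    _ = 2 * (1 + K) * C * (Φ ^ (1 / p) * Γ ^ (1 / q)) := by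
      rw [one_div, one_div, hpq.inv_add_inv_eq_one, ENNReal.rpow_one]
      ring

/-- The constant `c(p)` of the two-weight inequality, for the conjugate exponent `q` of `p`: each of
the two parts of the bilinear form contributes one summand. -/
noncomputable def testingConst (p q : ℝ) : ℝ≥0∞ :=
  2 * (1 + carlesonConst p) + 2 * (1 + carlesonConst q)

lemma testingConst_ne_zero (p q : ℝ) : testingConst p q ≠ 0 := by
  simp [testingConst]

lemma testingConst_ne_top (hp : 1 < p) (hq : 1 < q) : testingConst p q ≠ ∞ := by
  have := carlesonConst_ne_top hp
  have := carlesonConst_ne_top hq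
  unfold testingConst
  finiteness

lemma mul_setLAverage_mul_setLIntegral_comm {I : Set X} (hν : ν I ≠ ∞) (c : ℝ≥0∞) (f g : X → ℝ≥0∞) :
    c * (ν I / μ I) * (⨍⁻ y in I, g y ∂ν) * ∫⁻ x in I, f x ∂μ =
      c * (⨍⁻ y in I, f y ∂μ) * ∫⁻ x in I, g x ∂ν := by
  rw [← measure_mul_setLAverage g hν, setLAverage_eq μ f, div_eq_mul_inv, div_eq_mul_inv]
  ring

lemma sum_mul_setLAverage_mul_setLIntegral_le {α : Set X → ℝ≥0∞} {C₁ C₂ : ℝ≥0∞}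
    (hpq : p.HolderConjugate q) (hA : IsLaminar (A : Set (Set X))) (hA𝓛 : ↑A ⊆ 𝓛) (hA₀ : ∅ ∉ A)
    (hm : ∀ I ∈ A, MeasurableSet I) (hμ : ∀ I ∈ A, μ I ≠ ∞) (hν : ∀ I ∈ A, ν I ≠ ∞)
    (h₁ : TestingBound 𝓛 α p μ ν C₁)
    (h₂ : TestingBound 𝓛 (fun I ↦ α I * (ν I / μ I)) q ν μ C₂)
    (hf : Measurable f) (hg : Measurable g)
    (hf₀ : ∫⁻ x, f x ^ p ∂μ ≠ 0) (hf_top : ∫⁻ x, f x ^ p ∂μ ≠ ∞)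
    (hg₀ : ∫⁻ x, g x ^ q ∂ν ≠ 0) (hg_top : ∫⁻ x, g x ^ q ∂ν ≠ ∞) :
    ∑ I ∈ A, α I * (⨍⁻ y in I, f y ∂μ) * ∫⁻ x in I, g x ∂ν ≤
      testingConst p q * (C₁ + C₂) *
        ((∫⁻ x, f x ^ p ∂μ) ^ (1 / p) * (∫⁻ x, g x ^ q ∂ν) ^ (1 / q)) := by
  classical
  set Φ := ∫⁻ x, f x ^ p ∂μ
  set Γ := ∫⁻ x, g x ^ q ∂ν
  set P : Set X → Prop := fun I ↦
    Φ * ((⨍⁻ y in I, g y ∂ν) ^ q * ν I) ≤ Γ * ((⨍⁻ y in I, f y ∂μ) ^ p * μ I)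
  have hsub : ∀ (Q : Set X → Prop) [DecidablePred Q],
      ((A.filter Q : Finset (Set X)) : Set (Set X)) ⊆ A := fun Q _ ↦
    Finset.coe_subset.2 (A.filter_subset Q)
  have hfirst : ∑ I ∈ A with P I, α I * (⨍⁻ y in I, f y ∂μ) * ∫⁻ x in I, g x ∂ν ≤
      2 * (1 + carlesonConst p) * C₁ * (Φ ^ (1 / p) * Γ ^ (1 / q)) :=
    sum_mul_setLIntegral_le_of_dominated hpq (hA.mono (hsub P)) ((hsub P).trans hA𝓛)
      (fun h ↦ hA₀ (hsub P h)) (fun I hI ↦ hm I (hsub P hI)) (fun I hI ↦ hμ I (hsub P hI))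
      (fun I hI ↦ hν I (hsub P hI)) h₁ hf hg hf₀ hf_top fun I hI ↦ (Finset.mem_filter.1 hI).2
  have hsecond : ∑ I ∈ A with ¬ P I, α I * (⨍⁻ y in I, f y ∂μ) * ∫⁻ x in I, g x ∂ν ≤
      2 * (1 + carlesonConst q) * C₂ * (Γ ^ (1 / q) * Φ ^ (1 / p)) := by
    let Q : Set X → Prop := fun I ↦ ¬ P I
    rw [← Finset.sum_congr rfl fun I hI ↦
      mul_setLAverage_mul_setLIntegral_comm (hν I (hsub Q hI)) (α I) f g]
    exact sum_mul_setLIntegral_le_of_dominated hpq.symm (hA.mono (hsub Q)) ((hsub Q).trans hA𝓛)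
      (fun h ↦ hA₀ (hsub Q h)) (fun I hI ↦ hm I (hsub Q hI)) (fun I hI ↦ hν I (hsub Q hI))
      (fun I hI ↦ hμ I (hsub Q hI)) h₂ hg hf hg₀ hg_top
      fun I hI ↦ (not_le.1 (Finset.mem_filter.1 hI).2).le
  rw [← Finset.sum_filter_add_sum_filter_not A P]
  refine (add_le_add hfirst hsecond).trans ?_
  rw [mul_comm (Γ ^ (1 / q)), ← add_mul]
  gcongr
  rw [testingConst, add_mul]
  gcongr
  · exact le_self_add
  · exact le_add_self

end Bilinear

section Duality

variable {X : Type*} [MeasurableSpace X] {μ ν : Measure X} {𝓛 : Set (Set X)} {p q : ℝ}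
  {A : Finset (Set X)} {f : X → ℝ≥0∞}

lemma lintegral_indicatorSum_rpow_le (hp : 1 ≤ p) (hA : ∀ I ∈ A, MeasurableSet I)
    (w : Set X → ℝ≥0∞) :
    ∫⁻ x, indicatorSum A w x ^ p ∂ν ≤ (A.card : ℝ≥0∞) ^ (p - 1) * ∑ I ∈ A, w I ^ p * ν I := by
  have hp₀ : 0 < p := by linarith
  have hind : ∀ I ∈ A, Measurable fun x ↦ I.indicator (fun _ ↦ w I ^ p) x := fun I hI ↦
    measurable_const.indicator (hA I hI)
  calc ∫⁻ x, indicatorSum A w x ^ p ∂ν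
      ≤ ∫⁻ x, (A.card : ℝ≥0∞) ^ (p - 1) * ∑ I ∈ A, I.indicator (fun _ ↦ w I ^ p) x ∂ν := by
        refine lintegral_mono fun x ↦ (ENNReal.rpow_sum_le_const_mul_sum_rpow A _ hp).trans_eq ?_
        congr 1
        refine Finset.sum_congr rfl fun I _ ↦ ?_
        by_cases hx : x ∈ I <;> simp [hx, hp₀]
    _ = (A.card : ℝ≥0∞) ^ (p - 1) * ∑ I ∈ A, w I ^ p * ν I := by
      rw [lintegral_const_mul _ (Finset.measurable_fun_sum _ hind), lintegral_finsetSum _ hind]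
      congr 1
      exact Finset.sum_congr rfl fun I hI ↦ lintegral_indicator_const (hA I hI) _

lemma le_rpow_mul_of_le_mul_rpow_mul_rpow (hpq : p.HolderConjugate q) {N Z Φ : ℝ≥0∞} (hN : N ≠ 0)
    (hN_top : N ≠ ∞) (h : N ≤ Z * (Φ ^ (1 / p) * N ^ (1 / q))) : N ≤ Z ^ p * Φ := by
  have hp := hpq.pos
  have hsplit : N = N ^ (1 / p) * N ^ (1 / q) := by
    rw [← ENNReal.rpow_add _ _ hN hN_top, one_div, one_div, hpq.inv_add_inv_eq_one,
      ENNReal.rpow_one]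
  have hroot : N ^ (1 / p) ≤ Z * Φ ^ (1 / p) := by
    have hq0 : N ^ (1 / q) ≠ 0 := by simp [hN, hN_top]
    have hq_top : N ^ (1 / q) ≠ ∞ := by simp [hN, hN_top]
    refine (ENNReal.mul_le_mul_iff_left hq0 hq_top).1 ?_
    rwa [← hsplit, mul_assoc]
  calc N = (N ^ (1 / p)) ^ p := by
        rw [← ENNReal.rpow_mul, one_div_mul_cancel hp.ne', ENNReal.rpow_one]
    _ ≤ (Z * Φ ^ (1 / p)) ^ p := by gcongr
    _ = Z ^ p * Φ := by
      rw [mul_rpow_of_nonneg _ _ hp.le, ← ENNReal.rpow_mul, one_div_mul_cancel hp.ne',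
        ENNReal.rpow_one]

lemma lintegral_tsum_rpow_le_of_finset {ι : Type*} [Countable ι] {u : ι → X → ℝ≥0∞}
    (hu : ∀ i, Measurable (u i)) (hp : 0 < p) {R : ℝ≥0∞}
    (h : ∀ s : Finset ι, ∫⁻ x, (∑ i ∈ s, u i x) ^ p ∂ν ≤ R) :
    ∫⁻ x, (∑' i, u i x) ^ p ∂ν ≤ R := by
  have hdir : Directed (· ≤ ·) fun (s : Finset ι) x ↦ (∑ i ∈ s, u i x) ^ p :=
    directed_of_isDirected_le fun s t hst x ↦
      ENNReal.rpow_le_rpow (Finset.sum_le_sum_of_subset hst) hp.le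
  calc ∫⁻ x, (∑' i, u i x) ^ p ∂ν = ∫⁻ x, ⨆ s : Finset ι, (∑ i ∈ s, u i x) ^ p ∂ν := by
        refine lintegral_congr fun x ↦ ?_
        rw [ENNReal.tsum_eq_iSup_sum]
        exact (ENNReal.orderIsoRpow p hp).map_iSup _
    _ = ⨆ s : Finset ι, ∫⁻ x, (∑ i ∈ s, u i x) ^ p ∂ν :=
      lintegral_iSup_directed
        (fun s ↦ ((Finset.measurable_fun_sum s fun i _ ↦ hu i).pow_const p).aemeasurable) hdir
    _ ≤ R := iSup_le h

lemma lintegral_indicatorSum_rpow_ne_top (hp : 1 ≤ p) (hA : ∀ I ∈ A, MeasurableSet I)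
    (hν : ∀ I ∈ A, ν I ≠ ∞) {w : Set X → ℝ≥0∞} (hw : ∀ I ∈ A, w I ≠ ∞) :
    ∫⁻ x, indicatorSum A w x ^ p ∂ν ≠ ∞ := by
  refine ne_top_of_le_ne_top (ENNReal.mul_ne_top ?_ ?_) (lintegral_indicatorSum_rpow_le hp hA w)
  · exact rpow_ne_top_of_nonneg (by linarith) (by simp)
  · exact ENNReal.sum_ne_top.2 fun I hI ↦
      ENNReal.mul_ne_top (rpow_ne_top_of_nonneg (by linarith) (hw I hI)) (hν I hI)

lemma exists_rpow_mul_measure_ne_zero (hp : 1 ≤ p) (hA : ∀ I ∈ A, MeasurableSet I)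
    {w : Set X → ℝ≥0∞} (h : ∫⁻ x, indicatorSum A w x ^ p ∂ν ≠ 0) :
    ∃ I ∈ A, w I ^ p * ν I ≠ 0 := by
  by_contra! h₀
  have hle := lintegral_indicatorSum_rpow_le (ν := ν) hp hA w
  rw [Finset.sum_eq_zero h₀, mul_zero] at hle
  exact h (le_zero_iff.1 hle)

lemma setLAverage_eq_zero_of_lintegral_rpow_eq_zero (hp : 0 < p) (hf : Measurable f)
    (h : ∫⁻ x, f x ^ p ∂μ = 0) (I : Set X) : ⨍⁻ x in I, f x ∂μ = 0 := by
  have hf₀ : f =ᵐ[μ] 0 := by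
    filter_upwards [(lintegral_eq_zero_iff (hf.pow_const p)).1 h] with x hx
    exact (rpow_eq_zero_iff_of_pos hp).1 hx
  simp [laverage_congr (ae_restrict_of_ae hf₀)]

lemma lintegral_indicatorSum_rpow_eq_sum (hp : 1 ≤ p) (hA : ∀ I ∈ A, MeasurableSet I)
    (w : Set X → ℝ≥0∞) :
    ∫⁻ x, indicatorSum A w x ^ p ∂ν =
      ∑ I ∈ A, w I * ∫⁻ x in I, indicatorSum A w x ^ (p - 1) ∂ν := by
  rw [← lintegral_indicatorSum_mul hA w ((measurable_indicatorSum hA w).pow_const _)]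
  refine lintegral_congr fun x ↦ ?_
  rw [mul_comm, rpow_sub_one_mul_self hp]

lemma lintegral_indicatorSum_mul_setLAverage_rpow_le {α : Set X → ℝ≥0} {C₁ C₂ : ℝ≥0∞}
    (hpq : p.HolderConjugate q) (hA : IsLaminar (A : Set (Set X))) (hA𝓛 : ↑A ⊆ 𝓛) (hA₀ : ∅ ∉ A)
    (hm : ∀ I ∈ A, MeasurableSet I) (hμ : ∀ I ∈ A, μ I ≠ ∞) (hν : ∀ I ∈ A, ν I ≠ ∞)
    (h₁ : TestingBound 𝓛 (fun I ↦ α I) p μ ν C₁)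
    (h₂ : TestingBound 𝓛 (fun I ↦ α I * (ν I / μ I)) q ν μ C₂) (hf : Measurable f) :
    ∫⁻ x, indicatorSum A (fun I ↦ α I * ⨍⁻ y in I, f y ∂μ) x ^ p ∂ν ≤
      (testingConst p q * (C₁ + C₂)) ^ p * ∫⁻ x, f x ^ p ∂μ := by
  have hp := hpq.pos
  set w : Set X → ℝ≥0∞ := fun I ↦ α I * ⨍⁻ y in I, f y ∂μ with hw
  set T := indicatorSum A w
  set N := ∫⁻ x, T x ^ p ∂ν with hN
  have hT : Measurable T := measurable_indicatorSum hm w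
  by_cases hN₀ : N = 0
  · simp [hN₀]
  obtain ⟨I, hI, hI₀⟩ := exists_rpow_mul_measure_ne_zero hpq.lt.le hm hN₀
  simp only [hw, mul_rpow_of_nonneg _ _ hp.le, mul_right_comm _ _ (ν I)] at hI₀
  have hf₀ : ∫⁻ x, f x ^ p ∂μ ≠ 0 := fun h ↦ right_ne_zero_of_mul hI₀ <| by
    simp [setLAverage_eq_zero_of_lintegral_rpow_eq_zero hp hf h, hp]
  have hC₁ : C₁ ≠ 0 := by
    rintro rfl
    have hloc := h₁.rpow_mul_measure_le hp.le (hA𝓛 hI) (hm I hI)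
    rw [zero_rpow_of_pos hp, zero_mul, le_zero_iff] at hloc
    exact left_ne_zero_of_mul hI₀ hloc
  by_cases hf_top : ∫⁻ x, f x ^ p ∂μ = ∞
  · rw [hf_top, mul_top]
    · exact le_top
    · simp [hp.not_gt, testingConst_ne_zero, hC₁]
  have hN_top : N ≠ ∞ := lintegral_indicatorSum_rpow_ne_top hpq.lt.le hm hν fun I hI ↦
    ENNReal.mul_ne_top coe_ne_top (setLAverage_lt_top
      (setLIntegral_ne_top_of_lintegral_rpow_ne_top hpq.lt.le hf_top (hμ I hI))).ne
  have hpow : ∀ x, (T x ^ (p - 1)) ^ q = T x ^ p := fun x ↦ by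
    rw [← ENNReal.rpow_mul, hpq.sub_one_mul_conj]
  refine le_rpow_mul_of_le_mul_rpow_mul_rpow hpq hN₀ hN_top ?_
  calc N = ∑ I ∈ A, w I * ∫⁻ x in I, T x ^ (p - 1) ∂ν :=
        lintegral_indicatorSum_rpow_eq_sum hpq.lt.le hm w
    _ ≤ testingConst p q * (C₁ + C₂) *
          ((∫⁻ x, f x ^ p ∂μ) ^ (1 / p) * (∫⁻ x, (T x ^ (p - 1)) ^ q ∂ν) ^ (1 / q)) :=
      sum_mul_setLAverage_mul_setLIntegral_le hpq hA hA𝓛 hA₀ hm hμ hν h₁ h₂ hf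
        (hT.pow_const _) hf₀ hf_top (by simpa only [hpow]) (by simpa only [hpow])
    _ = _ := by simp only [hpow, hN]

lemma mul_avgOp_apply (c : ℝ≥0∞) (I : Set X) (f : X → ℝ≥0∞) (x : X) :
    c * avgOp μ I f x = c * (⨍⁻ y in I, f y ∂μ) * I.indicator 1 x := by
  by_cases hx : x ∈ I <;> simp [avgOp, setLAverage_eq, hx]

end Duality

end TwoWeight

open TwoWeight in
theorem two_weight_sufficiency_general {p q : ℝ} (hpq : p.HolderConjugate q) {X : Type*}
    [MeasurableSpace X] {𝓛 : Set (Set X)} (h𝓛 : IsLaminar 𝓛) (hcount : 𝓛.Countable)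
    (hm : ∀ I ∈ 𝓛, MeasurableSet I) {μ ν : Measure X} (hμ : ∀ I ∈ 𝓛, 0 < μ I ∧ μ I < ∞)
    (hν : ∀ I ∈ 𝓛, ν I < ∞) (α : Set X → ℝ≥0) {C₁ C₂ : ℝ≥0∞}
    (h₁ : TestingBound 𝓛 (fun I ↦ α I) p μ ν C₁)
    (h₂ : TestingBound 𝓛 (fun I ↦ α I * (ν I / μ I)) q ν μ C₂)
    {f : X → ℝ≥0∞} (hf : Measurable f) :
    ∫⁻ x, (∑' I : 𝓛, α I.1 * avgOp μ I.1 f x) ^ p ∂ν ≤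
      (testingConst p q * (C₁ + C₂)) ^ p * ∫⁻ x, f x ^ p ∂μ := by
  have := hcount.to_subtype
  simp only [mul_avgOp_apply]
  refine lintegral_tsum_rpow_le_of_finset
    (fun I : 𝓛 ↦ (measurable_one.indicator (hm I.1 I.2)).const_mul _) hpq.pos fun s ↦ ?_
  have hs : ↑(s.map (Function.Embedding.subtype _)) ⊆ 𝓛 := by simp
  have h₀ : ∅ ∉ 𝓛 := fun h ↦ by simpa using (hμ ∅ h).1
  simp only [← indicatorSum_map_subtype s fun I ↦ α I * ⨍⁻ y in I, f y ∂μ]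
  exact lintegral_indicatorSum_mul_setLAverage_rpow_le hpq (h𝓛.mono hs) hs (fun h ↦ h₀ (hs h))
    (fun I hI ↦ hm I (hs hI)) (fun I hI ↦ (hμ I (hs hI)).2.ne) (fun I hI ↦ (hν I (hs hI)).ne)
    h₁ h₂ hf

namespace LatticeFamily

variable {X : Type*} [MeasurableSpace X] (L : LatticeFamily X)

lemma subset_of_mem_gen_add {n : ℤ} {I : Set X} (hI : I ∈ L.gen n) (d : ℕ) :
    ∀ J ∈ L.gen (n + d), (I ∩ J).Nonempty → J ⊆ I := by
  induction d with
  | zero =>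
    rintro J hJ ⟨x, hxI, hxJ⟩
    rw [(L.pairwiseDisjoint n).elim_set hI (by simpa using hJ) x hxI hxJ]
  | succ d ih =>
    rintro J hJ ⟨x, hxI, hxJ⟩
    obtain ⟨K, hK, hxK⟩ : x ∈ ⋃₀ L.gen (n + d) := L.cover _ ▸ mem_univ x
    obtain ⟨S, hS, hKS⟩ := L.subdiv _ K hK
    obtain ⟨J', hJ', hxJ'⟩ : x ∈ ⋃₀ S := hKS ▸ hxK
    have hJmem : J ∈ L.gen (n + d + 1) := by simpa [add_assoc] using hJ
    obtain rfl : J' = J := (L.pairwiseDisjoint _).elim_set (hS hJ') hJmem x hxJ' hxJ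
    calc J' ⊆ K := hKS ▸ subset_sUnion_of_mem hJ'
      _ ⊆ I := ih K hK ⟨x, hxI, hxK⟩

lemma isLaminar_sets : TwoWeight.IsLaminar L.sets := by
  intro I hI J hJ hIJ
  obtain ⟨m, hI⟩ := mem_iUnion.1 hI
  obtain ⟨n, hJ⟩ := mem_iUnion.1 hJ
  rcases le_total m n with hmn | hnm
  · obtain ⟨d, rfl⟩ := Int.le.dest hmn
    exact .inr (L.subset_of_mem_gen_add hI d J hJ hIJ)
  · obtain ⟨d, rfl⟩ := Int.le.dest hnm
    exact .inl (L.subset_of_mem_gen_add hJ d I hI (inter_comm I J ▸ hIJ))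

lemma countable_sets : L.sets.Countable :=
  countable_iUnion L.countable

lemma measurableSet_of_mem_sets {I : Set X} (hI : I ∈ L.sets) : MeasurableSet I := by
  obtain ⟨n, hI⟩ := mem_iUnion.1 hI
  exact L.meas n I hI

end LatticeFamily

/-- If the two testing conditions hold with constants `C₁, C₂`, then the
positive operator `T_α f = ∑_{I ∈ 𝓛} α_I · E_I^μ f` is bounded from `L^p(μ)` to `L^p(ν)`
with norm at most `c(p) · (C₁ + C₂)`. -/
theorem two_weight_sufficiency (p p' : ℝ) (hp : 1 < p) (hpp' : 1 / p + 1 / p' = 1) :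
    ∃ c : ℝ≥0∞, 0 < c ∧ c < ∞ ∧
      ∀ (X : Type) [MeasurableSpace X] (L : LatticeFamily X) (μ ν : Measure X),
        (∀ I ∈ L.sets, 0 < μ I ∧ μ I < ∞) → (∀ I ∈ L.sets, ν I < ∞) →
        ∀ (α : Set X → ℝ≥0) (C₁ C₂ : ℝ≥0∞),
        (∀ J ∈ L.sets,
          ∫⁻ x in J, (∑' I : {I : Set X // I ∈ L.sets ∧ I ⊆ J},
              (α I.1 : ℝ≥0∞) * I.1.indicator 1 x) ^ p ∂ν ≤ C₁ ^ p * μ J) →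
        (∀ J ∈ L.sets,
          ∫⁻ x in J, (∑' I : {I : Set X // I ∈ L.sets ∧ I ⊆ J},
              (α I.1 : ℝ≥0∞) * (ν I.1 / μ I.1) * I.1.indicator 1 x) ^ p' ∂μ
            ≤ C₂ ^ p' * ν J) →
        ∀ f : X → ℝ≥0∞, Measurable f →
          ∫⁻ x, (∑' I : L.sets, (α I.1 : ℝ≥0∞) * avgOp μ I.1 f x) ^ p ∂ν
            ≤ (c * (C₁ + C₂)) ^ p * ∫⁻ x, f x ^ p ∂μ := by
  have hpq : p.HolderConjugate p' := Real.holderConjugate_iff.2 ⟨hp, by simpa [one_div] using hpp'⟩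
  refine ⟨TwoWeight.testingConst p p', pos_iff_ne_zero.2 (TwoWeight.testingConst_ne_zero p p'),
    (TwoWeight.testingConst_ne_top hpq.lt hpq.symm.lt).lt_top,
    fun X _ L μ ν hμ hν α C₁ C₂ h₁ h₂ f hf ↦ ?_⟩
  exact two_weight_sufficiency_general hpq L.isLaminar_sets L.countable_sets
    (fun I ↦ L.measurableSet_of_mem_sets) hμ hν α h₁ h₂ hf
end

section
/- Let 1 < p < ∞ and 1/p + 1/p' = 1. Suppose T_α f := Σ_{I ∈ 𝓛} α_I · E_I^μ f is bounded from L^p(μ) to L^p(ν) with norm ‖T_α‖. Then both testing conditions hold with constants comparable to ‖T_α‖: (i) for every J ∈ 𝓛, ∫_J (Σ_{I ∈ 𝓛, I ⊆ J} α_I · 1_I)^p dν ≤ C · ‖T_α‖^p · μ(J), and (ii) for every J ∈ 𝓛, ∫_J (Σ_{I ∈ 𝓛, I ⊆ J} α_I · (ν(I)/μ(I)) · 1_I)^{p'} dμ ≤ C · ‖T_α‖^{p'} · ν(J), where C depends only on p. -/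
open MeasureTheory ENNReal NNReal Set Filter

/-!
Put `β_I = α_I / μ(I)` and `Λ_μ f = ∑_I β_I (∫_I f dμ) 1_I`, so that `T_α = Λ_μ`. The bilinear form
`∫ (Λ_μ f) g dν = ∑_I β_I (∫_I f dμ) (∫_I g dν)` is symmetric under `(μ, f) ↔ (ν, g)`, hence by
duality a bound for `Λ_μ : L^p(μ) → L^p(ν)` is the same bound for `Λ_ν : L^{p'}(ν) → L^{p'}(μ)`.
Both testing conditions are then one estimate: on `1_J` each of the operators dominates its sum over
the sets `I ⊆ J`.
-/

section ConverseHolder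

theorem le_rpow_of_le_mul_rpow_one_div {p q : ℝ} (hpq : p.HolderConjugate q) {A K : ℝ≥0∞}
    (hA : A ≠ ∞) (h : A ≤ K * A ^ (1 / p)) : A ≤ K ^ q := by
  rcases eq_or_ne A 0 with rfl | hA₀
  · exact zero_le
  have hsplit : A = A ^ q⁻¹ * A ^ (1 / p) := by
    rw [← ENNReal.rpow_add _ _ hA₀ hA, one_div, hpq.symm.inv_add_inv_eq_one, ENNReal.rpow_one]
  have hpos : A ^ (1 / p) ≠ 0 := (ENNReal.rpow_pos (pos_iff_ne_zero.2 hA₀) hA).ne'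
  have hfin : A ^ (1 / p) ≠ ∞ := ENNReal.rpow_ne_top_of_nonneg hpq.one_div_nonneg hA
  rw [← ENNReal.rpow_inv_le_iff hpq.symm.pos, ← ENNReal.mul_le_mul_iff_left hpos hfin, ← hsplit]
  exact h

variable {X : Type*} [MeasurableSpace X] {μ : Measure X}

theorem exists_simpleFunc_le_lintegral_lt_top [SigmaFinite μ] {h : X → ℝ≥0∞} {L : ℝ≥0∞}
    (hL : L < ∫⁻ x, h x ∂μ) :
    ∃ g : SimpleFunc X ℝ≥0, (∀ x, (g x : ℝ≥0∞) ≤ h x) ∧ ∫⁻ x, g x ∂μ < ∞ ∧ L < ∫⁻ x, g x ∂μ := by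
  simp only [lintegral_eq_nnreal h, lt_iSup_iff, ← SimpleFunc.lintegral_eq_lintegral] at hL
  obtain ⟨φ, hφ, hLφ⟩ := hL
  obtain ⟨g, hgφ, hg, hLg⟩ := SimpleFunc.exists_lt_lintegral_simpleFunc_of_lt_lintegral hLφ
  exact ⟨g, fun x => (ENNReal.coe_le_coe.2 (hgφ x)).trans (hφ x), hg, hLg⟩

theorem lintegral_rpow_le_of_forall_lintegral_mul_le [SigmaFinite μ] {p q : ℝ}
    (hpq : p.HolderConjugate q) {h : X → ℝ≥0∞} {K : ℝ≥0∞}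
    (hK : ∀ f : X → ℝ≥0∞, Measurable f →
      ∫⁻ x, h x * f x ∂μ ≤ K * (∫⁻ x, f x ^ p ∂μ) ^ (1 / p)) :
    ∫⁻ x, h x ^ q ∂μ ≤ K ^ q := by
  by_contra! hlt
  obtain ⟨g, hgh, hg, hKg⟩ := exists_simpleFunc_le_lintegral_lt_top hlt
  refine hKg.not_ge (le_rpow_of_le_mul_rpow_one_div hpq hg.ne ?_)
  -- `g ≤ h ^ q` has finite integral; the extremal test function is `g ^ (1 / p)`.
  calc ∫⁻ x, g x ∂μ
      = ∫⁻ x, (g x : ℝ≥0∞) ^ q⁻¹ * (g x : ℝ≥0∞) ^ p⁻¹ ∂μ := by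
        simp only [← ENNReal.rpow_add_of_nonneg _ _ hpq.symm.inv_nonneg hpq.inv_nonneg,
          hpq.symm.inv_add_inv_eq_one, ENNReal.rpow_one]
    _ ≤ ∫⁻ x, h x * (g x : ℝ≥0∞) ^ p⁻¹ ∂μ := by
        gcongr with x
        exact (ENNReal.rpow_inv_le_iff hpq.symm.pos).2 (hgh x)
    _ ≤ K * (∫⁻ x, ((g x : ℝ≥0∞) ^ p⁻¹) ^ p ∂μ) ^ (1 / p) :=
        hK _ (g.measurable.coe_nnreal_ennreal.pow_const _)
    _ = K * (∫⁻ x, g x ∂μ) ^ (1 / p) := by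
        simp only [ENNReal.rpow_inv_rpow hpq.ne_zero]

end ConverseHolder

section PositiveOp

variable {X : Type*} [MeasurableSpace X]

/-- `T` maps `L^p(μ)` to `L^p(ν)` with norm at most `N`, tested on nonnegative measurable functions
and written with `p`-th powers, so that neither side needs a root. -/
def LpBoundedBy (T : (X → ℝ≥0∞) → X → ℝ≥0∞) (p : ℝ) (μ ν : Measure X) (N : ℝ≥0∞) : Prop :=
  ∀ f : X → ℝ≥0∞, Measurable f → ∫⁻ x, T f x ^ p ∂ν ≤ N ^ p * ∫⁻ x, f x ^ p ∂μ

/-- The positive operator `Λ_μ f = ∑_{I ∈ S} β_I (∫_I f dμ) 1_I`. With `β_I = α_I / μ(I)` it is the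
averaging operator `T_α`; leaving `1 / μ(I)` in the coefficients makes `Λ_ν` the adjoint of `Λ_μ`,
that is `∫ (Λ_μ f) g dν = ∫ f (Λ_ν g) dμ`. -/
noncomputable def positiveOp (S : Set (Set X)) (β : Set X → ℝ≥0∞) (μ : Measure X)
    (f : X → ℝ≥0∞) : X → ℝ≥0∞ := fun x =>
  ∑' I : S, β I.1 * (∫⁻ y in I.1, f y ∂μ) * I.1.indicator 1 x

variable {S : Set (Set X)} {β : Set X → ℝ≥0∞} {μ ν : Measure X} {f g : X → ℝ≥0∞} {J : Set X}
  {p q : ℝ} {N : ℝ≥0∞}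

theorem measurable_positiveOp (hS : S.Countable) (hm : ∀ I ∈ S, MeasurableSet I) :
    Measurable (positiveOp S β μ f) := by
  have := hS.to_subtype
  exact Measurable.tsum fun I => (measurable_one.indicator (hm I.1 I.2)).const_mul _

theorem lintegral_positiveOp_mul (hS : S.Countable) (hm : ∀ I ∈ S, MeasurableSet I)
    (hg : Measurable g) :
    ∫⁻ x, positiveOp S β μ f x * g x ∂ν =
      ∑' I : S, β I.1 * (∫⁻ x in I.1, f x ∂μ) * ∫⁻ x in I.1, g x ∂ν := by
  have := hS.to_subtype
  have hterm (c : ℝ≥0∞) (I : Set X) (x : X) :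
      c * I.indicator 1 x * g x = c * I.indicator g x := by
    by_cases hx : x ∈ I <;> simp [hx]
  simp only [positiveOp, ← ENNReal.tsum_mul_right, hterm]
  rw [lintegral_tsum fun I : S => ((hg.indicator (hm I.1 I.2)).const_mul _).aemeasurable]
  refine tsum_congr fun I => ?_
  rw [lintegral_const_mul _ (hg.indicator (hm I.1 I.2)), lintegral_indicator (hm I.1 I.2)]

theorem lintegral_positiveOp_mul_comm (hS : S.Countable) (hm : ∀ I ∈ S, MeasurableSet I)
    (hf : Measurable f) (hg : Measurable g) :
    ∫⁻ x, positiveOp S β μ f x * g x ∂ν = ∫⁻ x, positiveOp S β ν g x * f x ∂μ := by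
  rw [lintegral_positiveOp_mul hS hm hg, lintegral_positiveOp_mul hS hm hf]
  exact tsum_congr fun I => mul_right_comm ..

theorem positiveOp_restrict (hJ : MeasurableSet J) :
    positiveOp S β (μ.restrict J) f = positiveOp S β μ (J.indicator f) := by
  ext x
  refine tsum_congr fun I => ?_
  rw [setLIntegral_indicator hJ, Measure.restrict_restrict' hJ, inter_comm]

theorem tsum_subset_le_positiveOp_indicator_one (hJ : MeasurableSet J) (x : X) :
    ∑' I : {I : Set X // I ∈ S ∧ I ⊆ J}, β I.1 * μ I.1 * I.1.indicator 1 x ≤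
      positiveOp S β μ (J.indicator 1) x := by
  have hmass (I : {I : Set X // I ∈ S ∧ I ⊆ J}) : ∫⁻ y in I.1, J.indicator 1 y ∂μ = μ I.1 := by
    rw [lintegral_indicator_one hJ, Measure.restrict_apply hJ, inter_eq_self_of_subset_right I.2.2]
  simp only [← hmass]
  exact ENNReal.tsum_mono_subtype
    (fun I : Set X => β I * (∫⁻ y in I, J.indicator 1 y ∂μ) * I.indicator 1 x) fun _ hI => hI.1

theorem LpBoundedBy.restrict (h : LpBoundedBy (positiveOp S β μ) p μ ν N) (hp : 0 < p)
    (hJ : MeasurableSet J) :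
    LpBoundedBy (positiveOp S β (μ.restrict J)) p (μ.restrict J) ν N := by
  intro f hf
  have hpow (x : X) : J.indicator f x ^ p = J.indicator (fun y => f y ^ p) x := by
    by_cases hx : x ∈ J <;> simp [hx, hp]
  simpa only [positiveOp_restrict hJ, hpow, lintegral_indicator hJ] using h _ (hf.indicator hJ)

theorem LpBoundedBy.dual [SigmaFinite μ] (h : LpBoundedBy (positiveOp S β μ) p μ ν N)
    (hpq : p.HolderConjugate q) (hS : S.Countable) (hm : ∀ I ∈ S, MeasurableSet I) :
    LpBoundedBy (positiveOp S β ν) q ν μ N := by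
  intro g hg
  suffices hdual : ∀ f : X → ℝ≥0∞, Measurable f → ∫⁻ x, positiveOp S β ν g x * f x ∂μ ≤
      N * (∫⁻ x, g x ^ q ∂ν) ^ (1 / q) * (∫⁻ x, f x ^ p ∂μ) ^ (1 / p) by
    have hpow := lintegral_rpow_le_of_forall_lintegral_mul_le hpq hdual
    rwa [ENNReal.mul_rpow_of_nonneg _ _ hpq.symm.nonneg, one_div,
      ENNReal.rpow_inv_rpow hpq.symm.ne_zero] at hpow
  intro f hf
  calc ∫⁻ x, positiveOp S β ν g x * f x ∂μ
      = ∫⁻ x, positiveOp S β μ f x * g x ∂ν := lintegral_positiveOp_mul_comm hS hm hg hf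
    _ ≤ (∫⁻ x, positiveOp S β μ f x ^ p ∂ν) ^ (1 / p) * (∫⁻ x, g x ^ q ∂ν) ^ (1 / q) :=
        ENNReal.lintegral_mul_le_Lp_mul_Lq ν hpq (measurable_positiveOp hS hm).aemeasurable
          hg.aemeasurable
    _ ≤ (N ^ p * ∫⁻ x, f x ^ p ∂μ) ^ (1 / p) * (∫⁻ x, g x ^ q ∂ν) ^ (1 / q) := by
        gcongr
        · exact hpq.one_div_nonneg
        · exact h f hf
    _ = N * (∫⁻ x, g x ^ q ∂ν) ^ (1 / q) * (∫⁻ x, f x ^ p ∂μ) ^ (1 / p) := by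
        rw [ENNReal.mul_rpow_of_nonneg _ _ hpq.one_div_nonneg, one_div,
          ENNReal.rpow_rpow_inv hpq.ne_zero, mul_right_comm]

theorem LpBoundedBy.lintegral_tsum_subset_le (h : LpBoundedBy (positiveOp S β μ) p μ ν N)
    (hp : 0 < p) (hJ : MeasurableSet J) :
    ∫⁻ x, (∑' I : {I : Set X // I ∈ S ∧ I ⊆ J}, β I.1 * μ I.1 * I.1.indicator 1 x) ^ p ∂ν ≤
      N ^ p * μ J := by
  have hpow (x : X) : J.indicator (1 : X → ℝ≥0∞) x ^ p = J.indicator 1 x := by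
    by_cases hx : x ∈ J <;> simp [hx, hp]
  calc ∫⁻ x, (∑' I : {I : Set X // I ∈ S ∧ I ⊆ J}, β I.1 * μ I.1 * I.1.indicator 1 x) ^ p ∂ν
      ≤ ∫⁻ x, positiveOp S β μ (J.indicator 1) x ^ p ∂ν := by
        gcongr with x
        exact tsum_subset_le_positiveOp_indicator_one hJ x
    _ ≤ N ^ p * ∫⁻ x, J.indicator 1 x ^ p ∂μ := h _ (measurable_one.indicator hJ)
    _ = N ^ p * μ J := by simp only [hpow, lintegral_indicator_one hJ]

theorem tsum_mul_avgOp_eq_positiveOp (α : Set X → ℝ≥0∞) (x : X) :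
    ∑' I : S, α I.1 * avgOp μ I.1 f x = positiveOp S (fun I => α I / μ I) μ f x := by
  refine tsum_congr fun I => ?_
  by_cases hx : x ∈ I.1 <;> simp [avgOp, hx, div_eq_mul_inv, mul_comm, mul_left_comm]

end PositiveOp

theorem LatticeFamily.countable_sets_s1 {X : Type*} [MeasurableSpace X] (L : LatticeFamily X) :
    L.sets.Countable :=
  countable_iUnion L.countable

theorem LatticeFamily.measurableSet_of_mem_sets_s1 {X : Type*} [MeasurableSpace X]
    (L : LatticeFamily X) {I : Set X} (hI : I ∈ L.sets) : MeasurableSet I :=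
  let ⟨n, hn⟩ := mem_iUnion.1 hI
  L.meas n I hn

theorem two_weight_necessity_general {X : Type*} [MeasurableSpace X] {p q : ℝ}
    (hpq : p.HolderConjugate q) {S : Set (Set X)} (hS : S.Countable)
    (hm : ∀ I ∈ S, MeasurableSet I) {μ ν : Measure X}
    (hμ : ∀ I ∈ S, 0 < μ I ∧ μ I < ∞) {α : Set X → ℝ≥0∞} {N : ℝ≥0∞}
    (hT : LpBoundedBy (fun f x => ∑' I : S, α I.1 * avgOp μ I.1 f x) p μ ν N)
    {J : Set X} (hJ : MeasurableSet J) (hμJ : μ J < ∞) :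
    (∫⁻ x in J, (∑' I : {I : Set X // I ∈ S ∧ I ⊆ J},
        α I.1 * I.1.indicator 1 x) ^ p ∂ν ≤ N ^ p * μ J) ∧
      (∫⁻ x in J, (∑' I : {I : Set X // I ∈ S ∧ I ⊆ J},
        α I.1 * (ν I.1 / μ I.1) * I.1.indicator 1 x) ^ q ∂μ ≤ N ^ q * ν J) := by
  have hΛ : LpBoundedBy (positiveOp S (fun I => α I / μ I) μ) p μ ν N := by
    simpa only [LpBoundedBy, tsum_mul_avgOp_eq_positiveOp] using hT
  constructor
  · have hcoeff (I : {I : Set X // I ∈ S ∧ I ⊆ J}) : α I.1 / μ I.1 * μ I.1 = α I.1 :=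
      ENNReal.div_mul_cancel (hμ _ I.2.1).1.ne' (hμ _ I.2.1).2.ne
    simpa only [hcoeff] using
      (setLIntegral_le_lintegral J _).trans (hΛ.lintegral_tsum_subset_le hpq.pos hJ)
  · have hcoeff (I : Set X) : α I / μ I * ν I = α I * (ν I / μ I) := by
      rw [← mul_div_assoc, ENNReal.mul_div_right_comm]
    have : Fact (μ J < ∞) := ⟨hμJ⟩
    have hdual := (hΛ.restrict hpq.pos hJ).dual hpq hS hm
    simpa only [hcoeff] using hdual.lintegral_tsum_subset_le hpq.symm.pos hJ

/-- If `T_α f = ∑_{I ∈ 𝓛} α_I · E_I^μ f` is bounded from `L^p(μ)` to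
`L^p(ν)` with norm `N`, then both testing conditions hold with constants comparable
to `N`, i.e. with constants `c(p) · N^p` and `c(p) · N^{p'}`. -/
theorem two_weight_necessity (p p' : ℝ) (hp : 1 < p) (hpp' : 1 / p + 1 / p' = 1) :
    ∃ c : ℝ≥0∞, 0 < c ∧ c < ∞ ∧
      ∀ (X : Type) [MeasurableSpace X] (L : LatticeFamily X) (μ ν : Measure X),
        (∀ I ∈ L.sets, 0 < μ I ∧ μ I < ∞) → (∀ I ∈ L.sets, ν I < ∞) →
        ∀ (α : Set X → ℝ≥0) (N : ℝ≥0∞),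
        (∀ f : X → ℝ≥0∞, Measurable f →
          ∫⁻ x, (∑' I : L.sets, (α I.1 : ℝ≥0∞) * avgOp μ I.1 f x) ^ p ∂ν
            ≤ N ^ p * ∫⁻ x, f x ^ p ∂μ) →
        ∀ J ∈ L.sets,
          (∫⁻ x in J, (∑' I : {I : Set X // I ∈ L.sets ∧ I ⊆ J},
              (α I.1 : ℝ≥0∞) * I.1.indicator 1 x) ^ p ∂ν ≤ c * N ^ p * μ J) ∧
          (∫⁻ x in J, (∑' I : {I : Set X // I ∈ L.sets ∧ I ⊆ J},
              (α I.1 : ℝ≥0∞) * (ν I.1 / μ I.1) * I.1.indicator 1 x) ^ p' ∂μ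
            ≤ c * N ^ p' * ν J) := by
  have hpq : p.HolderConjugate p' := Real.holderConjugate_iff.2 ⟨hp, by simpa using hpp'⟩
  refine ⟨1, one_pos, one_lt_top, fun X _ L μ ν hμ _ α N hT J hJ => ?_⟩
  simp only [one_mul]
  exact two_weight_necessity_general hpq L.countable_sets_s1 (fun _ => L.measurableSet_of_mem_sets_s1)
    hμ (α := fun I => α I) hT (L.measurableSet_of_mem_sets_s1 hJ) (hμ J hJ).2
end

section
/- Let 1 < p ≤ q < ∞. Suppose the single testing condition holds: for every J ∈ 𝓛, ∫_J (Σ_{I ∈ 𝓛, I ⊆ J} α_I^q · 1_I)^{p/q} dν ≤ C₁^p · μ(J). Then for every f ∈ L^p(μ), ∫_X (Σ_{I ∈ 𝓛} |α_I · E_I^μ f|^q)^{p/q} dν ≤ C^p · ∫_X |f|^p dμ, where C is at most an absolute constant (depending only on p, q) times C₁. -/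
open MeasureTheory ENNReal NNReal Set Filter

/-!
Sort the sets `I` by the dyadic levels `2 ^ k` lying below the average of `f` over `I`. Since
`p / q ≤ 1`, the outer power is subadditive over the levels, so it suffices to bound, for each `k`,
the integral of `(∑ α_I ^ q · 1_I) ^ (p / q)` over the family of sets whose average exceeds `2 ^ k`.
The maximal sets of a finite such family are disjoint and cover it, so applying the testing
condition on each of them bounds this integral by `C₁ ^ p · μ(U_k)`, where `U_k` is the union of the
family. The sum `∑ 2 ^ (k p) · μ(U_k)` is then controlled by `∫ f ^ p dμ`, exactly as in the proof
of the `L^p` boundedness of the lattice maximal function from its weak-type inequality.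
-/

section Rpow

lemma iSup_rpow {ι : Sort*} (a : ι → ℝ≥0∞) {r : ℝ} (hr : 0 < r) :
    (⨆ i, a i) ^ r = ⨆ i, a i ^ r :=
  (ENNReal.orderIsoRpow r hr).map_iSup a

variable {ι : Type*}

lemma sum_rpow_le_sum_rpow (s : Finset ι) (a : ι → ℝ≥0∞) {r : ℝ} (hr : 0 < r) (hr1 : r ≤ 1) :
    (∑ i ∈ s, a i) ^ r ≤ ∑ i ∈ s, a i ^ r :=
  Finset.le_sum_of_subadditive (· ^ r) (ENNReal.zero_rpow_of_pos hr).le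
    (fun x y => ENNReal.rpow_add_le_add_rpow x y hr.le hr1) s a

lemma tsum_rpow_le_tsum_rpow (a : ι → ℝ≥0∞) {r : ℝ} (hr : 0 < r) (hr1 : r ≤ 1) :
    (∑' i, a i) ^ r ≤ ∑' i, a i ^ r := by
  rw [ENNReal.tsum_eq_iSup_sum, iSup_rpow _ hr]
  exact iSup_le fun s => (sum_rpow_le_sum_rpow s a hr hr1).trans (ENNReal.sum_le_tsum s)

lemma lintegral_tsum_rpow_le_of_forall_finset {X : Type*} [MeasurableSpace X] {ν : Measure X}
    [Countable ι] {g : ι → X → ℝ≥0∞} (hg : ∀ i, Measurable (g i)) {r : ℝ} (hr : 0 < r)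
    {B : ℝ≥0∞} (h : ∀ s : Finset ι, ∫⁻ x, (∑ i ∈ s, g i x) ^ r ∂ν ≤ B) :
    ∫⁻ x, (∑' i, g i x) ^ r ∂ν ≤ B := by
  simp only [ENNReal.tsum_eq_iSup_sum, iSup_rpow _ hr]
  rw [lintegral_iSup_directed]
  · exact iSup_le h
  · exact fun s => ((Finset.measurable_sum s fun i _ => hg i).pow_const r).aemeasurable
  · refine Monotone.directed_le fun s t hst x => ?_
    exact ENNReal.rpow_le_rpow (Finset.sum_le_sum_of_subset hst) hr.le

end Rpow

section DyadicSum

/-- The sum of `t ^ δ` over the dyadic numbers `t = 2 ^ k`, `k ∈ ℤ`, lying below `s`. For `δ > 0`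
it is comparable to `s ^ δ` and serves as a discrete layer-cake formula for that power. -/
noncomputable def dyadicSum (δ : ℝ) (s : ℝ≥0∞) : ℝ≥0∞ :=
  ∑' k : ℤ, if (2 : ℝ≥0∞) ^ k < s then ((2 : ℝ≥0∞) ^ k) ^ δ else 0

/-- The ratio of `∑ t ^ δ` over the dyadic numbers `t ≤ 2 ^ m` to its largest term `(2 ^ m) ^ δ`;
it is the geometric series of ratio `2 ^ (-δ)`. -/
noncomputable def dyadicConst (δ : ℝ) : ℝ≥0∞ :=
  (1 - 2 ^ (-δ))⁻¹

lemma dyadicConst_ne_zero (δ : ℝ) : dyadicConst δ ≠ 0 :=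
  ENNReal.inv_ne_zero.2 (ne_top_of_le_ne_top one_ne_top tsub_le_self)

lemma dyadicConst_ne_top {δ : ℝ} (hδ : 0 < δ) : dyadicConst δ ≠ ∞ :=
  ENNReal.inv_ne_top.2 <| (tsub_pos_of_lt <|
    ENNReal.rpow_lt_one_of_one_lt_of_neg one_lt_two (neg_neg_of_pos hδ)).ne'

lemma two_rpow_ne_zero (δ : ℝ) : (2 : ℝ≥0∞) ^ δ ≠ 0 :=
  (ENNReal.rpow_pos two_pos ofNat_ne_top).ne'

lemma two_rpow_ne_top (δ : ℝ) : (2 : ℝ≥0∞) ^ δ ≠ ∞ :=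
  ENNReal.rpow_ne_top_of_ne_zero two_ne_zero ofNat_ne_top

lemma two_zpow_ne_zero (k : ℤ) : (2 : ℝ≥0∞) ^ k ≠ 0 :=
  (ENNReal.zpow_pos two_ne_zero ofNat_ne_top k).ne'

lemma two_zpow_ne_top (k : ℤ) : (2 : ℝ≥0∞) ^ k ≠ ∞ :=
  ENNReal.zpow_ne_top two_ne_zero ofNat_ne_top k

lemma exists_two_zpow_lt_le {s : ℝ≥0∞} (h0 : s ≠ 0) (htop : s ≠ ∞) :
    ∃ m : ℤ, (2 : ℝ≥0∞) ^ m < s ∧ s ≤ 2 ^ (m + 1) :=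
  ENNReal.exists_mem_Ioc_zpow h0 htop one_lt_two ofNat_ne_top

lemma dyadicSum_top {δ : ℝ} (hδ : 0 < δ) : dyadicSum δ ∞ = ∞ := by
  simp only [dyadicSum, (two_zpow_ne_top _).lt_top, if_true]
  refine top_unique ?_
  calc ∞ = ∑' _ : ℕ, (1 : ℝ≥0∞) := (ENNReal.tsum_const_eq_top_of_ne_zero one_ne_zero).symm
    _ ≤ ∑' n : ℕ, ((2 : ℝ≥0∞) ^ (n : ℤ)) ^ δ := by
        refine ENNReal.tsum_le_tsum fun n => ENNReal.one_le_rpow ?_ hδ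
        rw [zpow_natCast]
        exact one_le_pow₀ one_le_two
    _ ≤ ∑' k : ℤ, ((2 : ℝ≥0∞) ^ k) ^ δ :=
        ENNReal.tsum_comp_le_tsum_of_injective Nat.cast_injective _

lemma rpow_le_mul_dyadicSum {δ : ℝ} (hδ : 0 < δ) (s : ℝ≥0∞) :
    s ^ δ ≤ 2 ^ δ * dyadicSum δ s := by
  rcases eq_or_ne s 0 with rfl | h0
  · simp [hδ]
  rcases eq_or_ne s ∞ with rfl | htop
  · rw [dyadicSum_top hδ, ENNReal.mul_top (two_rpow_ne_zero δ)]
    exact le_top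
  obtain ⟨m, hm, hm'⟩ := exists_two_zpow_lt_le h0 htop
  calc s ^ δ ≤ (2 * 2 ^ m) ^ δ := by
        gcongr
        rwa [ENNReal.zpow_add two_ne_zero ofNat_ne_top, zpow_one, mul_comm] at hm'
    _ = 2 ^ δ * ((2 : ℝ≥0∞) ^ m) ^ δ := ENNReal.mul_rpow_of_nonneg _ _ hδ.le
    _ ≤ 2 ^ δ * dyadicSum δ s := by
        gcongr
        exact (if_pos hm).ge.trans (ENNReal.le_tsum m)

lemma dyadicSum_le_of_le_two_zpow {s : ℝ≥0∞} {m : ℤ} (hs : s ≤ 2 ^ (m + 1)) (δ : ℝ) :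
    dyadicSum δ s ≤ dyadicConst δ * ((2 : ℝ≥0∞) ^ m) ^ δ := by
  have hinj : Function.Injective fun j : ℕ => m - (j : ℤ) := fun i j hij => by simpa using hij
  have hsupp : (Function.support fun k : ℤ =>
      if (2 : ℝ≥0∞) ^ k < s then ((2 : ℝ≥0∞) ^ k) ^ δ else 0) ⊆
        range fun j : ℕ => m - (j : ℤ) := by
    intro k hk
    have hks : (2 : ℝ≥0∞) ^ k < s := by
      by_contra h
      exact hk (if_neg h)
    have hkm : k ≤ m := by
      by_contra! h
      exact (hs.trans (ENNReal.zpow_le_of_le one_le_two h)).not_gt hks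
    exact ⟨(m - k).toNat, by simp only; omega⟩
  calc dyadicSum δ s
      ≤ ∑' j : ℕ, ((2 : ℝ≥0∞) ^ (m - (j : ℤ))) ^ δ := by
        rw [dyadicSum, ← hinj.tsum_eq hsupp]
        exact ENNReal.tsum_le_tsum fun j => by split_ifs <;> simp
    _ = ∑' j : ℕ, ((2 : ℝ≥0∞) ^ m) ^ δ * (2 ^ (-δ)) ^ j := by
        refine tsum_congr fun j => ?_
        simp only [← ENNReal.rpow_intCast, ← ENNReal.rpow_natCast, ← ENNReal.rpow_mul]
        rw [← ENNReal.rpow_add _ _ two_ne_zero ofNat_ne_top]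
        congr 1
        push_cast
        ring
    _ = dyadicConst δ * ((2 : ℝ≥0∞) ^ m) ^ δ := by
        rw [ENNReal.tsum_mul_left, ENNReal.tsum_geometric, mul_comm, dyadicConst]

lemma dyadicSum_le_mul_rpow {δ : ℝ} (hδ : 0 < δ) (s : ℝ≥0∞) :
    dyadicSum δ s ≤ dyadicConst δ * s ^ δ := by
  rcases eq_or_ne s 0 with rfl | h0
  · simp [dyadicSum]
  rcases eq_or_ne s ∞ with rfl | htop
  · rw [ENNReal.top_rpow_of_pos hδ, ENNReal.mul_top (dyadicConst_ne_zero δ)]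
    exact le_top
  obtain ⟨m, hm, hm'⟩ := exists_two_zpow_lt_le h0 htop
  exact (dyadicSum_le_of_le_two_zpow hm' δ).trans (by gcongr)

lemma sum_mul_rpow_rpow_le {ι : Type*} (s : Finset ι) (w a : ι → ℝ≥0∞) {p q : ℝ} (hp : 0 < p)
    (hpq : p ≤ q) :
    (∑ i ∈ s, w i * a i ^ q) ^ (p / q) ≤
      2 ^ p * ∑' k : ℤ, ((2 : ℝ≥0∞) ^ k) ^ p * (∑ i ∈ s with 2 ^ k < a i, w i) ^ (p / q) := by
  have hq : 0 < q := hp.trans_le hpq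
  have hr : 0 < p / q := div_pos hp hq
  have rpow_rpow (t : ℝ≥0∞) : (t ^ q) ^ (p / q) = t ^ p := by
    rw [← ENNReal.rpow_mul, mul_div_cancel₀ _ hq.ne']
  have levels : ∑ i ∈ s, w i * dyadicSum q (a i) =
      ∑' k : ℤ, ((2 : ℝ≥0∞) ^ k) ^ q * ∑ i ∈ s with 2 ^ k < a i, w i := by
    simp only [dyadicSum, ← ENNReal.tsum_mul_left]
    rw [← Summable.tsum_finsetSum fun _ _ => ENNReal.summable]
    simp only [mul_ite, mul_zero, ← Finset.sum_filter, Finset.mul_sum, mul_comm]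
  calc (∑ i ∈ s, w i * a i ^ q) ^ (p / q)
      ≤ (∑ i ∈ s, w i * (2 ^ q * dyadicSum q (a i))) ^ (p / q) := by
        gcongr with i
        exact rpow_le_mul_dyadicSum hq (a i)
    _ = 2 ^ p * (∑' k : ℤ, ((2 : ℝ≥0∞) ^ k) ^ q * ∑ i ∈ s with 2 ^ k < a i, w i) ^ (p / q) := by
        simp only [mul_left_comm _ ((2 : ℝ≥0∞) ^ q), ← Finset.mul_sum]
        rw [levels, ENNReal.mul_rpow_of_nonneg _ _ hr.le, rpow_rpow]
    _ ≤ 2 ^ p * ∑' k : ℤ, (((2 : ℝ≥0∞) ^ k) ^ q * ∑ i ∈ s with 2 ^ k < a i, w i) ^ (p / q) := by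
        gcongr
        exact tsum_rpow_le_tsum_rpow _ hr ((div_le_one hq).2 hpq)
    _ = _ := by simp only [ENNReal.mul_rpow_of_nonneg _ _ hr.le, rpow_rpow]

end DyadicSum

/-- A family of sets any two of which are disjoint or comparable: the nesting of a dyadic lattice,
with its division into generations forgotten. -/
def IsNested {X : Type*} (𝒟 : Set (Set X)) : Prop :=
  ∀ I ∈ 𝒟, ∀ J ∈ 𝒟, Disjoint I J ∨ I ⊆ J ∨ J ⊆ I

section Nested

variable {X : Type*} {𝒟 : Set (Set X)}

lemma IsNested.mono {ℰ : Set (Set X)} (h𝒟 : IsNested 𝒟) (hℰ : ℰ ⊆ 𝒟) : IsNested ℰ :=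
  fun I hI J hJ => h𝒟 I (hℰ hI) J (hℰ hJ)

lemma IsNested.exists_disjoint_subfamily {D : Finset (Set X)} (hD : IsNested (D : Set (Set X))) :
    ∃ M ⊆ D, (M : Set (Set X)).PairwiseDisjoint id ∧ ∀ I ∈ D, ∃ J ∈ M, I ⊆ J := by
  classical
  refine ⟨D.filter (Maximal (· ∈ D)), Finset.filter_subset _ _, ?_, fun I hI => ?_⟩
  · intro I hI J hJ hne
    obtain ⟨hI, hImax⟩ := Finset.mem_filter.1 hI
    obtain ⟨hJ, hJmax⟩ := Finset.mem_filter.1 hJ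
    rcases hD I hI J hJ with h | h | h
    · exact h
    · exact absurd (hImax.eq_of_le hJ h) hne
    · exact absurd (hJmax.eq_of_le hI h).symm hne
  · obtain ⟨J, hIJ, hJ⟩ := D.exists_le_maximal hI
    exact ⟨J, Finset.mem_filter.2 ⟨hJ.prop, hJ⟩, hIJ⟩

lemma biUnion_eq_biUnion_of_cover {D M : Finset (Set X)} (hMD : M ⊆ D)
    (hcover : ∀ I ∈ D, ∃ J ∈ M, I ⊆ J) : ⋃ I ∈ D, I = ⋃ J ∈ M, J :=
  (iUnion₂_subset fun I hI =>
    let ⟨_, hJ, hIJ⟩ := hcover I hI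
    hIJ.trans (subset_biUnion_of_mem (u := id) hJ)).antisymm
      (biUnion_subset_biUnion_left hMD)

lemma sum_mul_indicator_le_tsum_subset (w : Set X → ℝ≥0∞) {D M : Finset (Set X)}
    (hD𝒟 : ↑D ⊆ 𝒟) (hM : (M : Set (Set X)).PairwiseDisjoint id)
    (hcover : ∀ I ∈ D, ∃ J ∈ M, I ⊆ J) {J : Set X} (hJ : J ∈ M) {x : X} (hx : x ∈ J) :
    ∑ I ∈ D, w I * I.indicator 1 x ≤
      ∑' I : {I : Set X // I ∈ 𝒟 ∧ I ⊆ J}, w I.1 * I.1.indicator 1 x := by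
  have subset_of_mem {I : Set X} (hI : I ∈ D) (hxI : x ∈ I) : I ⊆ J := by
    obtain ⟨K, hK, hIK⟩ := hcover I hI
    exact hM.elim_set hK hJ x (hIK hxI) hx ▸ hIK
  let g : Set X → ℝ≥0∞ := fun I => w I * I.indicator 1 x
  calc ∑ I ∈ D, g I ≤ ∑ I ∈ D, {I | I ∈ 𝒟 ∧ I ⊆ J}.indicator g I := by
        refine Finset.sum_le_sum fun I hI => ?_
        by_cases hxI : x ∈ I
        · rw [indicator_of_mem (show I ∈ {I | I ∈ 𝒟 ∧ I ⊆ J} from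
            ⟨hD𝒟 hI, subset_of_mem hI hxI⟩)]
        · simp [g, hxI]
    _ ≤ ∑' I, {I | I ∈ 𝒟 ∧ I ⊆ J}.indicator g I := ENNReal.sum_le_tsum D
    _ = ∑' I : {I : Set X // I ∈ 𝒟 ∧ I ⊆ J}, g I.1 := (tsum_subtype {I | I ∈ 𝒟 ∧ I ⊆ J} g).symm

variable [MeasurableSpace X] {μ ν : Measure X} {f : X → ℝ≥0∞}

lemma lintegral_sum_indicator_rpow_le_of_testing (hmeas : ∀ I ∈ 𝒟, MeasurableSet I)
    {w : Set X → ℝ≥0∞} {r : ℝ} (hr : 0 < r) {C : ℝ≥0∞}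
    (htest : ∀ J ∈ 𝒟, ∫⁻ x in J, (∑' I : {I : Set X // I ∈ 𝒟 ∧ I ⊆ J},
      w I.1 * I.1.indicator 1 x) ^ r ∂ν ≤ C * μ J)
    {D : Finset (Set X)} (hD𝒟 : ↑D ⊆ 𝒟) (hD : IsNested (D : Set (Set X))) :
    ∫⁻ x, (∑ I ∈ D, w I * I.indicator 1 x) ^ r ∂ν ≤ C * μ (⋃ I ∈ D, I) := by
  obtain ⟨M, hMD, hM, hcover⟩ := hD.exists_disjoint_subfamily
  have hMmeas : ∀ J ∈ M, MeasurableSet (id J) := fun J hJ => hmeas J (hD𝒟 (hMD hJ))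
  have hunion := biUnion_eq_biUnion_of_cover hMD hcover
  have support_subset : (Function.support fun x => (∑ I ∈ D, w I * I.indicator 1 x) ^ r) ⊆
      ⋃ J ∈ M, J := by
    rw [← hunion]
    refine fun x hx => of_not_not fun hxD => hx ?_
    simp only [mem_iUnion, not_exists] at hxD
    simp +contextual [hxD, hr]
  calc ∫⁻ x, (∑ I ∈ D, w I * I.indicator 1 x) ^ r ∂ν
      = ∑ J ∈ M, ∫⁻ x in J, (∑ I ∈ D, w I * I.indicator 1 x) ^ r ∂ν := by
        rw [← setLIntegral_eq_of_support_subset support_subset]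
        exact lintegral_biUnion_finset hM hMmeas _
    _ ≤ ∑ J ∈ M, ∫⁻ x in J, (∑' I : {I : Set X // I ∈ 𝒟 ∧ I ⊆ J},
          w I.1 * I.1.indicator 1 x) ^ r ∂ν := by
        refine Finset.sum_le_sum fun J hJ => setLIntegral_mono' (hMmeas J hJ) fun x hx => ?_
        gcongr
        exact sum_mul_indicator_le_tsum_subset w hD𝒟 hM hcover hJ hx
    _ ≤ ∑ J ∈ M, C * μ J := Finset.sum_le_sum fun J hJ => htest J (hD𝒟 (hMD hJ))
    _ = C * μ (⋃ I ∈ D, I) := by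
        rw [hunion, ← Finset.mul_sum]
        exact congrArg (C * ·) (measure_biUnion_finset hM hMmeas).symm

lemma mul_measure_le_setLIntegral_indicator {g : X → ℝ≥0∞} {t : ℝ≥0∞} (ht : t ≠ ∞) {J : Set X}
    (hJ : μ J ≠ ∞) (h : 2 * t * μ J ≤ ∫⁻ x in J, g x ∂μ) :
    t * μ J ≤ ∫⁻ x in J, {x | t < g x}.indicator g x ∂μ := by
  refine (ENNReal.add_le_add_iff_right (ENNReal.mul_ne_top ht hJ)).1 ?_
  calc t * μ J + t * μ J = 2 * t * μ J := by ring
    _ ≤ ∫⁻ x in J, g x ∂μ := h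
    _ ≤ ∫⁻ x in J, ({x | t < g x}.indicator g x + t) ∂μ := by
        gcongr with x
        by_cases hx : t < g x
        · simp [hx]
        · simpa [hx] using not_lt.1 hx
    _ = ∫⁻ x in J, {x | t < g x}.indicator g x ∂μ + t * μ J := by
        rw [lintegral_add_right _ measurable_const, setLIntegral_const]

/-- Truncating `f` at height `t / 2`
is what makes the bound, weighted by `t ^ (p - 1)`, summable over dyadic `t`. -/
lemma mul_measure_biUnion_le_lintegral_indicator {D : Finset (Set X)}
    (hD : IsNested (D : Set (Set X))) (hmeas : ∀ I ∈ D, MeasurableSet I)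
    (hμ : ∀ I ∈ D, μ I ≠ ∞) (hf : Measurable f) {t : ℝ≥0∞} (ht : t ≠ ∞)
    (havg : ∀ I ∈ D, t ≤ ⨍⁻ x in I, f x ∂μ) :
    t * μ (⋃ I ∈ D, I) ≤ ∫⁻ x, {x | t < 2 * f x}.indicator (fun x => 2 * f x) x ∂μ := by
  obtain ⟨M, hMD, hM, hcover⟩ := hD.exists_disjoint_subfamily
  have hMmeas : ∀ J ∈ M, MeasurableSet (id J) := fun J hJ => hmeas J (hMD hJ)
  rw [biUnion_eq_biUnion_of_cover hMD hcover]
  calc t * μ (⋃ J ∈ M, J) = ∑ J ∈ M, t * μ J := by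
        rw [← Finset.mul_sum]
        exact congrArg (t * ·) (measure_biUnion_finset hM hMmeas)
    _ ≤ ∑ J ∈ M, ∫⁻ x in J, {x | t < 2 * f x}.indicator (fun x => 2 * f x) x ∂μ := by
        refine Finset.sum_le_sum fun J hJ =>
          mul_measure_le_setLIntegral_indicator ht (hμ J (hMD hJ)) ?_
        rw [lintegral_const_mul 2 hf, mul_assoc]
        gcongr
        exact ENNReal.mul_le_of_le_div (setLAverage_eq μ f J ▸ havg J (hMD hJ))
    _ = ∫⁻ x in ⋃ J ∈ M, J, {x | t < 2 * f x}.indicator (fun x => 2 * f x) x ∂μ :=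
        (lintegral_biUnion_finset hM hMmeas _).symm
    _ ≤ _ := setLIntegral_le_lintegral _ _

lemma tsum_lintegral_indicator_le (hf : Measurable f) {p : ℝ} (hp : 1 < p) :
    ∑' k : ℤ, ((2 : ℝ≥0∞) ^ k) ^ (p - 1) * ∫⁻ x, {x | 2 ^ k < f x}.indicator f x ∂μ ≤
      dyadicConst (p - 1) * ∫⁻ x, f x ^ p ∂μ := by
  have hmeas (k : ℤ) : Measurable ({x | 2 ^ k < f x}.indicator f) :=
    hf.indicator (measurableSet_lt measurable_const hf)
  calc _ = ∫⁻ x, ∑' k : ℤ, ((2 : ℝ≥0∞) ^ k) ^ (p - 1) * {x | 2 ^ k < f x}.indicator f x ∂μ := by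
        rw [lintegral_tsum fun k => ((hmeas k).const_mul _).aemeasurable]
        exact tsum_congr fun k => (lintegral_const_mul _ (hmeas k)).symm
    _ = ∫⁻ x, dyadicSum (p - 1) (f x) * f x ∂μ := by
        simp only [dyadicSum, ← ENNReal.tsum_mul_right, indicator_apply, mem_ofPred_eq, mul_ite,
          ite_mul, mul_zero, zero_mul]
    _ ≤ ∫⁻ x, dyadicConst (p - 1) * f x ^ p ∂μ := by
        refine lintegral_mono fun x => ?_
        calc dyadicSum (p - 1) (f x) * f x
            ≤ dyadicConst (p - 1) * f x ^ (p - 1) * f x := by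
              gcongr
              exact dyadicSum_le_mul_rpow (sub_pos.2 hp) (f x)
          _ = dyadicConst (p - 1) * f x ^ p := by
              nth_rw 2 [← ENNReal.rpow_one (f x)]
              rw [mul_assoc, ← ENNReal.rpow_add_of_nonneg _ _ (sub_pos.2 hp).le zero_le_one,
                sub_add_cancel]
    _ = _ := lintegral_const_mul _ (hf.pow_const p)

lemma tsum_mul_measure_biUnion_le {A : Finset (Set X)} (hA : IsNested (A : Set (Set X)))
    (hmeas : ∀ I ∈ A, MeasurableSet I) (hμ : ∀ I ∈ A, μ I ≠ ∞) (hf : Measurable f) {p : ℝ}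
    (hp : 1 < p) :
    ∑' k : ℤ, ((2 : ℝ≥0∞) ^ k) ^ p * μ (⋃ I ∈ A.filter (2 ^ k < ⨍⁻ x in ·, f x ∂μ), I) ≤
      2 ^ p * dyadicConst (p - 1) * ∫⁻ x, f x ^ p ∂μ := by
  have weak (k : ℤ) := mul_measure_biUnion_le_lintegral_indicator
    (D := A.filter (2 ^ k < ⨍⁻ x in ·, f x ∂μ)) (hA.mono (Finset.filter_subset _ A))
    (fun I hI => hmeas I (Finset.mem_filter.1 hI).1) (fun I hI => hμ I (Finset.mem_filter.1 hI).1)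
    hf (two_zpow_ne_top k) (fun I hI => (Finset.mem_filter.1 hI).2.le)
  calc _ = ∑' k : ℤ, ((2 : ℝ≥0∞) ^ k) ^ (p - 1) *
          (2 ^ k * μ (⋃ I ∈ A.filter (2 ^ k < ⨍⁻ x in ·, f x ∂μ), I)) := by
        refine tsum_congr fun k => ?_
        rw [← mul_assoc, ENNReal.rpow_sub _ _ (two_zpow_ne_zero k) (two_zpow_ne_top k),
          ENNReal.rpow_one, ENNReal.div_mul_cancel (two_zpow_ne_zero k) (two_zpow_ne_top k)]
    _ ≤ ∑' k : ℤ, ((2 : ℝ≥0∞) ^ k) ^ (p - 1) *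
          ∫⁻ x, {x | 2 ^ k < 2 * f x}.indicator (fun x => 2 * f x) x ∂μ := by
        gcongr with k
        exact weak k
    _ ≤ dyadicConst (p - 1) * ∫⁻ x, (2 * f x) ^ p ∂μ :=
        tsum_lintegral_indicator_le (hf.const_mul 2) hp
    _ = 2 ^ p * dyadicConst (p - 1) * ∫⁻ x, f x ^ p ∂μ := by
        simp only [ENNReal.mul_rpow_of_nonneg _ _ (zero_lt_one.trans hp).le]
        rw [lintegral_const_mul _ (hf.pow_const p)]
        ring

lemma lintegral_sum_mul_laverage_rpow_le {A : Finset (Set X)} (hA𝒟 : ↑A ⊆ 𝒟) (h𝒟 : IsNested 𝒟)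
    (hmeas : ∀ I ∈ 𝒟, MeasurableSet I) (hμ : ∀ I ∈ 𝒟, μ I ≠ ∞) {w : Set X → ℝ≥0∞} {p q : ℝ}
    (hp : 1 < p) (hpq : p ≤ q) {C : ℝ≥0∞}
    (htest : ∀ J ∈ 𝒟, ∫⁻ x in J, (∑' I : {I : Set X // I ∈ 𝒟 ∧ I ⊆ J},
      w I.1 * I.1.indicator 1 x) ^ (p / q) ∂ν ≤ C * μ J) (hf : Measurable f) :
    ∫⁻ x, (∑ I ∈ A, w I * I.indicator 1 x * (⨍⁻ y in I, f y ∂μ) ^ q) ^ (p / q) ∂ν ≤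
      2 ^ p * (2 ^ p * dyadicConst (p - 1)) * C * ∫⁻ x, f x ^ p ∂μ := by
  have hp0 : 0 < p := zero_lt_one.trans hp
  let D (k : ℤ) : Finset (Set X) := A.filter (2 ^ k < ⨍⁻ x in ·, f x ∂μ)
  have hD𝒟 (k : ℤ) : ↑(D k) ⊆ 𝒟 := fun I hI => hA𝒟 (Finset.mem_filter.1 hI).1
  have hlevel (k : ℤ) : Measurable fun x => (∑ I ∈ D k, w I * I.indicator 1 x) ^ (p / q) :=
    (Finset.measurable_sum _ fun I hI =>
      (measurable_one.indicator (hmeas I (hD𝒟 k hI))).const_mul _).pow_const _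
  calc _ ≤ ∫⁻ x, 2 ^ p * ∑' k : ℤ, ((2 : ℝ≥0∞) ^ k) ^ p *
          (∑ I ∈ D k, w I * I.indicator 1 x) ^ (p / q) ∂ν := by
        gcongr with x
        exact sum_mul_rpow_rpow_le A _ _ hp0 hpq
    _ = 2 ^ p * ∑' k : ℤ, ((2 : ℝ≥0∞) ^ k) ^ p *
          ∫⁻ x, (∑ I ∈ D k, w I * I.indicator 1 x) ^ (p / q) ∂ν := by
        rw [lintegral_const_mul _ (Measurable.tsum fun k => (hlevel k).const_mul _),
          lintegral_tsum fun k => ((hlevel k).const_mul _).aemeasurable]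
        simp only [lintegral_const_mul _ (hlevel _)]
    _ ≤ 2 ^ p * ∑' k : ℤ, ((2 : ℝ≥0∞) ^ k) ^ p * (C * μ (⋃ I ∈ D k, I)) := by
        gcongr with k
        exact lintegral_sum_indicator_rpow_le_of_testing hmeas (div_pos hp0 (hp0.trans_le hpq))
          htest (hD𝒟 k) (h𝒟.mono (hD𝒟 k))
    _ = 2 ^ p * C * ∑' k : ℤ, ((2 : ℝ≥0∞) ^ k) ^ p * μ (⋃ I ∈ D k, I) := by
        simp only [mul_left_comm _ C, ENNReal.tsum_mul_left, mul_assoc]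
    _ ≤ 2 ^ p * C * (2 ^ p * dyadicConst (p - 1) * ∫⁻ x, f x ^ p ∂μ) := by
        gcongr
        exact tsum_mul_measure_biUnion_le (h𝒟.mono hA𝒟) (fun I hI => hmeas I (hA𝒟 hI))
          (fun I hI => hμ I (hA𝒟 hI)) hf hp
    _ = _ := by ring

lemma mul_avgOp_rpow (μ : Measure X) (a : ℝ≥0∞) (I : Set X) (f : X → ℝ≥0∞) {q : ℝ} (hq : 0 < q)
    (x : X) :
    (a * avgOp μ I f x) ^ q = a ^ q * I.indicator 1 x * (⨍⁻ y in I, f y ∂μ) ^ q := by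
  rw [setLAverage_eq, avgOp]
  by_cases hx : x ∈ I
  · simp [hx, ENNReal.mul_rpow_of_nonneg _ _ hq.le]
  · simp [hx, hq]

end Nested

theorem vector_valued_sufficiency_p_le_q_general (p q : ℝ) (hp : 1 < p) (hpq : p ≤ q) :
    ∃ c : ℝ≥0∞, 0 < c ∧ c < ∞ ∧
      ∀ (X : Type*) [MeasurableSpace X] (𝒟 : Set (Set X)) (μ ν : Measure X),
        IsNested 𝒟 → 𝒟.Countable → (∀ I ∈ 𝒟, MeasurableSet I) → (∀ I ∈ 𝒟, 0 < μ I ∧ μ I < ∞) →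
        ∀ (α : Set X → ℝ≥0∞) (C₁ : ℝ≥0∞),
        (∀ J ∈ 𝒟, ∫⁻ x in J, (∑' I : {I : Set X // I ∈ 𝒟 ∧ I ⊆ J},
            α I.1 ^ q * I.1.indicator 1 x) ^ (p / q) ∂ν ≤ C₁ ^ p * μ J) →
        ∀ f : X → ℝ≥0∞, Measurable f →
          ∫⁻ x, (∑' I : 𝒟, (α I.1 * avgOp μ I.1 f x) ^ q) ^ (p / q) ∂ν
            ≤ (c * C₁) ^ p * ∫⁻ x, f x ^ p ∂μ := by
  have hp0 : 0 < p := zero_lt_one.trans hp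
  have hq : 0 < q := hp0.trans_le hpq
  let K : ℝ≥0∞ := 2 ^ p * (2 ^ p * dyadicConst (p - 1))
  have hK0 : K ≠ 0 := mul_ne_zero (two_rpow_ne_zero p)
    (mul_ne_zero (two_rpow_ne_zero p) (dyadicConst_ne_zero _))
  have hKtop : K ≠ ∞ := ENNReal.mul_ne_top (two_rpow_ne_top p)
    (ENNReal.mul_ne_top (two_rpow_ne_top p) (dyadicConst_ne_top (sub_pos.2 hp)))
  refine ⟨K ^ p⁻¹, ENNReal.rpow_pos (pos_iff_ne_zero.2 hK0) hKtop,
    ENNReal.rpow_lt_top_of_nonneg (inv_nonneg.2 hp0.le) hKtop, ?_⟩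
  intro X _ 𝒟 μ ν hnested hcount hmeas hμ α C₁ htest f hf
  have := hcount.to_subtype
  rw [ENNReal.mul_rpow_of_nonneg _ _ hp0.le, ENNReal.rpow_inv_rpow hp0.ne']
  refine lintegral_tsum_rpow_le_of_forall_finset (fun I => ?_) (div_pos hp0 hq) fun s => ?_
  · exact ((measurable_const.indicator (hmeas I I.2)).const_mul _).pow_const q
  · have bound := lintegral_sum_mul_laverage_rpow_le (A := s.map (.subtype _))
      (w := fun I => α I ^ q) (by simp) hnested hmeas (fun I hI => (hμ I hI).2.ne) hp hpq
      htest hf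
    simpa only [mul_avgOp_rpow μ _ _ f hq, Finset.sum_map, Function.Embedding.subtype_apply]
      using bound

namespace LatticeFamily

variable {X : Type*} [MeasurableSpace X] (L : LatticeFamily X)

lemma disjoint_or_subset_of_mem_gen_add (m : ℤ) (d : ℕ) {I J : Set X} (hI : I ∈ L.gen m)
    (hJ : J ∈ L.gen (m + d)) : Disjoint I J ∨ J ⊆ I := by
  induction d generalizing m I with
  | zero =>
    rw [Nat.cast_zero, add_zero] at hJ
    rcases eq_or_ne I J with rfl | hne
    · exact .inr subset_rfl
    · exact .inl (L.pairwiseDisjoint m hI hJ hne)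
  | succ d ih =>
    obtain ⟨S, hS, rfl⟩ := L.subdiv m I hI
    rw [Nat.cast_succ, add_comm (d : ℤ), ← add_assoc] at hJ
    by_cases h : ∃ K ∈ S, J ⊆ K
    · obtain ⟨K, hK, hJK⟩ := h
      exact .inr (hJK.trans (subset_sUnion_of_mem hK))
    · push Not at h
      exact .inl (disjoint_sUnion_left.2 fun K hK =>
        (ih (m + 1) (hS hK) hJ).resolve_right (h K hK))

lemma isNested_sets : IsNested L.sets := by
  intro I hI J hJ
  obtain ⟨m, hI⟩ := mem_iUnion.1 hI
  obtain ⟨n, hJ⟩ := mem_iUnion.1 hJ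
  rcases le_total m n with h | h
  · obtain ⟨d, rfl⟩ := Int.le.dest h
    exact (L.disjoint_or_subset_of_mem_gen_add m d hI hJ).imp_right .inr
  · obtain ⟨d, rfl⟩ := Int.le.dest h
    exact (L.disjoint_or_subset_of_mem_gen_add n d hJ hI).imp (·.symm) .inl

end LatticeFamily

/-- For `1 < p ≤ q < ∞`, the single testing condition with constant `C₁`
implies the vector-valued inequality
`∫ (∑_{I ∈ 𝓛} |α_I E_I^μ f|^q)^{p/q} dν ≤ C^p ∫ |f|^p dμ` with `C ≤ c(p,q) · C₁`. -/
theorem vector_valued_sufficiency_p_le_q (p q : ℝ) (hp : 1 < p) (hpq : p ≤ q) :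
    ∃ c : ℝ≥0∞, 0 < c ∧ c < ∞ ∧
      ∀ (X : Type) [MeasurableSpace X] (L : LatticeFamily X) (μ ν : Measure X),
        (∀ I ∈ L.sets, 0 < μ I ∧ μ I < ∞) → (∀ I ∈ L.sets, ν I < ∞) →
        ∀ (α : Set X → ℝ≥0) (C₁ : ℝ≥0∞),
        (∀ J ∈ L.sets,
          ∫⁻ x in J, (∑' I : {I : Set X // I ∈ L.sets ∧ I ⊆ J},
              (α I.1 : ℝ≥0∞) ^ q * I.1.indicator 1 x) ^ (p / q) ∂ν ≤ C₁ ^ p * μ J) →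
        ∀ f : X → ℝ≥0∞, Measurable f →
          ∫⁻ x, (∑' I : L.sets, ((α I.1 : ℝ≥0∞) * avgOp μ I.1 f x) ^ q) ^ (p / q) ∂ν
            ≤ (c * C₁) ^ p * ∫⁻ x, f x ^ p ∂μ := by
  obtain ⟨c, hc0, hctop, hc⟩ := vector_valued_sufficiency_p_le_q_general p q hp hpq
  exact ⟨c, hc0, hctop, fun X _ L μ ν hμ _ α => hc X L.sets μ ν L.isNested_sets L.countable_sets
    (fun _ => L.measurableSet_of_mem_sets) hμ fun I => α I⟩
end

section
/- Rubio de Francia Algorithm: let 1 ≤ q < p < ∞ and let μ be a positive measure on (X, 𝒯) with 0 < μ(I) < ∞ for all I ∈ 𝓛. For every nonnegative f ∈ L^p(μ) there exists a function F ∈ L^p(μ) such that (i) f ≤ F pointwise, (ii) ‖f‖_{L^p(μ)} ≤ ‖F‖_{L^p(μ)} ≤ 2^{1/q} ‖f‖_{L^p(μ)}, and (iii) for every I ∈ 𝓛, μ(I)^{-1} ∫_I F^q dμ ≤ K · inf_{x ∈ I} F^q(x), where K is a constant depending only on p and q. -/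
open MeasureTheory ENNReal NNReal Set Filter

/- Write `M = maxOp L μ`. Since two lattice sets are nested or disjoint, the sets on which the
average of `f` exceeds `t` can be replaced by disjoint ones, so `M` is of weak type `(1, 1)`;
truncating `f` at height `t / 2` and integrating over `t` bounds `M` on `L^r` for `r = p / q > 1`,
say by `C`. The series `G = ∑ (2 C)⁻ᵏ Mᵏ(f ^ q)` then dominates `f ^ q`, has norm at most
`2 ‖f ^ q‖_r`, and satisfies `M G ≤ 2 C G`, because applying the sublinear operator `M` shifts the
series by one term. Hence `F = G ^ (1 / q)` has the required properties. -/

section Lp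

variable {X : Type*} [MeasurableSpace X] {μ : Measure X}

lemma lintegral_Ioi_ofReal_rpow (s : ℝ) : ∫⁻ t in Ioi (0 : ℝ), ENNReal.ofReal (t ^ s) = ∞ := by
  by_contra h
  have hmeas : Measurable fun t : ℝ => t ^ s := by fun_prop
  refine not_integrableOn_Ioi_rpow s ((lintegral_ofReal_ne_top_iff_integrable
    hmeas.aestronglyMeasurable ?_).mp h)
  filter_upwards [ae_restrict_mem measurableSet_Ioi] with t ht
  exact Real.rpow_nonneg (mem_Ioi.mp ht).le s

lemma lintegral_rpow_eq_lintegral_meas_ofReal_lt_mul {f : X → ℝ≥0∞} (hf : AEMeasurable f μ)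
    {a : ℝ} (ha : 0 < a) :
    ∫⁻ x, f x ^ a ∂μ = ENNReal.ofReal a *
      ∫⁻ t in Ioi (0 : ℝ), μ {x | ENNReal.ofReal t < f x} * ENNReal.ofReal (t ^ (a - 1)) := by
  by_cases htop : μ {x | f x = ∞} = 0
  · have hfin : ∀ᵐ x ∂μ, f x ≠ ∞ := by simpa only [ae_iff, not_not] using htop
    calc ∫⁻ x, f x ^ a ∂μ = ∫⁻ x, ENNReal.ofReal ((f x).toReal ^ a) ∂μ := by
          refine lintegral_congr_ae (hfin.mono fun x hx => ?_)
          beta_reduce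
          rw [← ENNReal.ofReal_rpow_of_nonneg ENNReal.toReal_nonneg ha.le, ENNReal.ofReal_toReal hx]
      _ = ENNReal.ofReal a *
          ∫⁻ t in Ioi (0 : ℝ), μ {x | t < (f x).toReal} * ENNReal.ofReal (t ^ (a - 1)) :=
        lintegral_rpow_eq_lintegral_meas_lt_mul μ (ae_of_all _ fun _ => ENNReal.toReal_nonneg)
          hf.ennreal_toReal ha
      _ = _ := by
        congr 1
        refine setLIntegral_congr_fun measurableSet_Ioi fun t ht => ?_
        congr 1
        refine measure_congr (hfin.mono fun x hx => ?_)
        exact propext (ENNReal.ofReal_lt_iff_lt_toReal (mem_Ioi.mp ht).le hx).symm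
  · have hleft : ∫⁻ x, f x ^ a ∂μ = ∞ := by
      refine lintegral_eq_top_of_measure_eq_top_ne_zero (hf.pow_const a) ?_
      simpa only [ENNReal.rpow_eq_top_iff_of_pos ha] using htop
    have hright : ∫⁻ t in Ioi (0 : ℝ),
        μ {x | ENNReal.ofReal t < f x} * ENNReal.ofReal (t ^ (a - 1)) = ∞ := by
      refine top_unique ?_
      calc ∞ = μ {x | f x = ∞} * ∫⁻ t in Ioi (0 : ℝ), ENNReal.ofReal (t ^ (a - 1)) := by
            rw [lintegral_Ioi_ofReal_rpow, ENNReal.mul_top htop]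
        _ = ∫⁻ t in Ioi (0 : ℝ), μ {x | f x = ∞} * ENNReal.ofReal (t ^ (a - 1)) :=
          (lintegral_const_mul _ (by fun_prop)).symm
        _ ≤ _ := by
          gcongr with t x
          rintro (hx : f x = ∞)
          exact hx ▸ ENNReal.ofReal_lt_top
    rw [hleft, hright, ENNReal.mul_top (ENNReal.ofReal_pos.mpr ha).ne']

/- Both sides are expanded by the layer cake formula, the right one for the measure with density
`w`. -/
lemma lintegral_rpow_le_of_mul_meas_lt_le {u v w : X → ℝ≥0∞} (hu : AEMeasurable u μ)
    (hv : Measurable v) (hw : Measurable w)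
    (h : ∀ t : ℝ≥0∞, t * μ {x | t < u x} ≤ ∫⁻ x in {x | t < v x}, w x ∂μ) {r : ℝ} (hr : 1 < r) :
    ∫⁻ x, u x ^ r ∂μ ≤ ENNReal.ofReal (r / (r - 1)) * ∫⁻ x, w x * v x ^ (r - 1) ∂μ := by
  have hr₁ : 0 < r - 1 := sub_pos.mpr hr
  have hlevel : ∀ t ∈ Ioi (0 : ℝ), μ {x | ENNReal.ofReal t < u x} * ENNReal.ofReal (t ^ (r - 1)) ≤
      μ.withDensity w {x | ENNReal.ofReal t < v x} * ENNReal.ofReal (t ^ (r - 1 - 1)) := by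
    rintro t (ht : 0 < t)
    have hpow : t ^ (r - 1) = t * t ^ (r - 1 - 1) := by
      rw [Real.rpow_sub_one ht.ne' (r - 1), mul_div_cancel₀ _ ht.ne']
    rw [withDensity_apply w (measurableSet_lt measurable_const hv), hpow, ENNReal.ofReal_mul ht.le,
      ← mul_assoc, mul_comm (μ _)]
    gcongr
    exact h _
  calc ∫⁻ x, u x ^ r ∂μ
      = ENNReal.ofReal r * ∫⁻ t in Ioi (0 : ℝ),
          μ {x | ENNReal.ofReal t < u x} * ENNReal.ofReal (t ^ (r - 1)) :=
        lintegral_rpow_eq_lintegral_meas_ofReal_lt_mul hu (by linarith)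
    _ ≤ ENNReal.ofReal r * ∫⁻ t in Ioi (0 : ℝ),
          μ.withDensity w {x | ENNReal.ofReal t < v x} * ENNReal.ofReal (t ^ (r - 1 - 1)) := by
        exact mul_le_mul_right (setLIntegral_mono' measurableSet_Ioi hlevel) _
    _ = ENNReal.ofReal (r / (r - 1)) * ∫⁻ x, v x ^ (r - 1) ∂μ.withDensity w := by
        rw [lintegral_rpow_eq_lintegral_meas_ofReal_lt_mul hv.aemeasurable hr₁, ← mul_assoc,
          ← ENNReal.ofReal_mul (by positivity), div_mul_cancel₀ r hr₁.ne']
    _ = ENNReal.ofReal (r / (r - 1)) * ∫⁻ x, w x * v x ^ (r - 1) ∂μ := by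
        rw [lintegral_withDensity_eq_lintegral_mul μ hw (hv.pow_const _)]
        simp only [Pi.mul_apply]

lemma eLpNorm'_const_mul {r : ℝ} (hr : 0 < r) (c : ℝ≥0∞) {f : X → ℝ≥0∞} (hf : Measurable f) :
    eLpNorm' (fun x => c * f x) r μ = c * eLpNorm' f r μ := by
  simp only [eLpNorm', enorm_eq_self, ENNReal.mul_rpow_of_nonneg _ _ hr.le]
  rw [lintegral_const_mul _ (hf.pow_const r), ENNReal.mul_rpow_of_nonneg _ _ (by positivity),
    one_div, ENNReal.rpow_rpow_inv hr.ne']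

lemma eLpNorm'_eq_eLpNorm'_rpow_div {q : ℝ} (hq : 0 < q) (p : ℝ) (g : X → ℝ≥0∞) :
    eLpNorm' g p μ = eLpNorm' (fun x => g x ^ q) (p / q) μ ^ q⁻¹ := by
  have hpow : eLpNorm' (fun x => g x ^ q) (p / q) μ = eLpNorm' g (p / q * q) μ ^ q :=
    eLpNorm'_enorm_rpow g (p / q) q hq
  rw [hpow, div_mul_cancel₀ p hq.ne', ENNReal.rpow_rpow_inv hq.ne']

lemma eLpNorm'_tsum_le {r : ℝ} (hr : 1 ≤ r) {u : ℕ → X → ℝ≥0∞} (hu : ∀ k, Measurable (u k)) :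
    eLpNorm' (fun x => ∑' k, u k x) r μ ≤ ∑' k, eLpNorm' (u k) r μ := by
  have hr₀ : 0 < r := by linarith
  have hsup (x : X) : (∑' k, u k x) ^ r = ⨆ n, (∑ k ∈ Finset.range n, u k x) ^ r := by
    rw [ENNReal.tsum_eq_iSup_nat]
    exact (ENNReal.orderIsoRpow r hr₀).map_iSup _
  have hmono : Monotone fun n x => (∑ k ∈ Finset.range n, u k x) ^ r := by
    intro m n hmn x
    beta_reduce
    gcongr
  rw [eLpNorm', one_div, ENNReal.rpow_inv_le_iff hr₀]
  simp only [enorm_eq_self, hsup]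
  rw [lintegral_iSup (fun n => (Finset.measurable_fun_sum _ fun k _ => hu k).pow_const r) hmono]
  refine iSup_le fun n => (ENNReal.rpow_inv_le_iff hr₀).mp ?_
  calc (∫⁻ x, (∑ k ∈ Finset.range n, u k x) ^ r ∂μ) ^ r⁻¹
      = eLpNorm' (∑ k ∈ Finset.range n, u k) r μ := by
        simp only [eLpNorm', enorm_eq_self, Finset.sum_apply, one_div]
    _ ≤ ∑ k ∈ Finset.range n, eLpNorm' (u k) r μ :=
        eLpNorm'_sum_le (fun k _ => (hu k).aestronglyMeasurable) hr
    _ ≤ ∑' k, eLpNorm' (u k) r μ := ENNReal.sum_le_tsum _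

end Lp

namespace LatticeFamily

variable {X : Type*} [MeasurableSpace X] (L : LatticeFamily X)

lemma exists_superset_of_mem_gen_succ {n : ℤ} {J : Set X} (hJ : J ∈ L.gen (n + 1))
    (hne : J.Nonempty) : ∃ I ∈ L.gen n, J ⊆ I := by
  obtain ⟨x, hx⟩ := hne
  obtain ⟨I, hI, hxI⟩ : x ∈ ⋃₀ L.gen n := L.cover n ▸ mem_univ x
  obtain ⟨S, hS, rfl⟩ := L.subdiv n I hI
  obtain ⟨J', hJ', hxJ'⟩ := hxI
  obtain rfl : J' = J := (L.pairwiseDisjoint (n + 1)).elim_set (hS hJ') hJ x hxJ' hx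
  exact ⟨_, hI, subset_sUnion_of_mem hJ'⟩

lemma exists_superset_of_mem_gen {m n : ℤ} (hmn : m ≤ n) {J : Set X} (hJ : J ∈ L.gen n)
    (hne : J.Nonempty) : ∃ I ∈ L.gen m, J ⊆ I := by
  induction n, hmn using Int.leInduction generalizing J with
  | base => exact ⟨J, hJ, subset_rfl⟩
  | succ n _ ih =>
    obtain ⟨J', hJ', hJJ'⟩ := L.exists_superset_of_mem_gen_succ hJ hne
    obtain ⟨I, hI, hJ'I⟩ := ih hJ' (hne.mono hJJ')
    exact ⟨I, hI, hJJ'.trans hJ'I⟩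

lemma subset_of_mem_gen_of_le {m n : ℤ} (hmn : m ≤ n) {I J : Set X} (hI : I ∈ L.gen m)
    (hJ : J ∈ L.gen n) {x : X} (hxI : x ∈ I) (hxJ : x ∈ J) : J ⊆ I := by
  obtain ⟨I', hI', hJI'⟩ := L.exists_superset_of_mem_gen hmn hJ ⟨x, hxJ⟩
  rwa [(L.pairwiseDisjoint m).elim_set hI hI' x hxI (hJI' hxJ)]

lemma pairwiseDisjoint_maximal {B : Set (Set X)} (hB : B ⊆ L.sets) :
    {I | Maximal (· ∈ B) I}.PairwiseDisjoint id := by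
  intro I hI J hJ hne
  refine disjoint_left.mpr fun x (hxI : x ∈ I) (hxJ : x ∈ J) => hne ?_
  obtain ⟨m, hIm⟩ := mem_iUnion.mp (hB hI.prop)
  obtain ⟨n, hJn⟩ := mem_iUnion.mp (hB hJ.prop)
  rcases le_total m n with hmn | hnm
  · exact (hJ.eq_of_subset hI.prop (L.subset_of_mem_gen_of_le hmn hIm hJn hxI hxJ)).symm
  · exact hI.eq_of_subset hJ.prop (L.subset_of_mem_gen_of_le hnm hJn hIm hxJ hxI)

lemma sUnion_maximal_eq {B : Set (Set X)} {m : ℤ} (hB : ∀ I ∈ B, ∃ n ≥ m, I ∈ L.gen n) :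
    ⋃₀ {I | Maximal (· ∈ B) I} = ⋃₀ B := by
  refine (sUnion_subset_sUnion fun I hI => hI.prop).antisymm ?_
  rintro x ⟨I, hI, hxI⟩
  obtain ⟨i, hmi, hIi⟩ := hB I hI
  obtain ⟨n, ⟨-, J, hJ, hxJ, hJn⟩, hmin⟩ :=
    Int.exists_least_of_bdd (P := fun n => m ≤ n ∧ ∃ J ∈ B, x ∈ J ∧ J ∈ L.gen n)
      ⟨m, fun _ h => h.1⟩ ⟨i, hmi, I, hI, hxI, hIi⟩
  refine ⟨J, ⟨hJ, fun J' hJ' hJJ' => ?_⟩, hxJ⟩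
  obtain ⟨k, hmk, hJ'k⟩ := hB J' hJ'
  have hnk : n ≤ k := hmin k ⟨hmk, J', hJ', hJJ' hxJ, hJ'k⟩
  exact L.subset_of_mem_gen_of_le hnk hJn hJ'k hxJ (hJJ' hxJ)

end LatticeFamily

section MaximalOperator

variable {X : Type*} [MeasurableSpace X] (L : LatticeFamily X) (μ : Measure X)

lemma setOf_lt_maxOp (f : X → ℝ≥0∞) (t : ℝ≥0∞) :
    {x | t < maxOp L μ f x} = ⋃₀ {I ∈ L.sets | t < (∫⁻ y in I, f y ∂μ) / μ I} := by
  ext x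
  simp only [maxOp, lt_iSup_iff, mem_ofPred_eq, mem_sUnion, exists_prop]
  exact exists_congr fun I => and_right_comm

lemma measurable_maxOp (f : X → ℝ≥0∞) : Measurable (maxOp L μ f) := by
  refine measurable_of_Ioi fun t => ?_
  change MeasurableSet {x | t < maxOp L μ f x}
  rw [setOf_lt_maxOp]
  exact .sUnion (L.countable_sets.mono (sep_subset _ _)) fun I hI =>
    L.measurableSet_of_mem_sets hI.1

variable {L}

lemma setLIntegral_div_le_maxOp (f : X → ℝ≥0∞) {I : Set X} (hI : I ∈ L.sets) {x : X}
    (hx : x ∈ I) : (∫⁻ y in I, f y ∂μ) / μ I ≤ maxOp L μ f x :=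
  le_iSup₂_of_le (f := fun J (_ : J ∈ L.sets ∧ x ∈ J) => (∫⁻ y in J, f y ∂μ) / μ J) I ⟨hI, hx⟩
    le_rfl

variable (L)

lemma maxOp_le_maxOp_add_const {f g : X → ℝ≥0∞} {c : ℝ≥0∞} (hfg : ∀ x, f x ≤ g x + c) (x : X) :
    maxOp L μ f x ≤ maxOp L μ g x + c := by
  refine iSup₂_le fun I hI => ?_
  calc (∫⁻ y in I, f y ∂μ) / μ I ≤ (∫⁻ y in I, (g y + c) ∂μ) / μ I := by
        gcongr with y
        exact hfg y
    _ = (∫⁻ y in I, g y ∂μ) / μ I + c * μ I / μ I := by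
        rw [lintegral_add_right _ measurable_const, setLIntegral_const, ENNReal.add_div]
    _ ≤ maxOp L μ g x + c :=
        add_le_add (setLIntegral_div_le_maxOp μ g hI.1 hI.2) (ENNReal.div_le_of_le_mul le_rfl)

lemma maxOp_tsum_mul_le (a : ℕ → ℝ≥0∞) {u : ℕ → X → ℝ≥0∞} (hu : ∀ k, Measurable (u k)) (x : X) :
    maxOp L μ (fun y => ∑' k, a k * u k y) x ≤ ∑' k, a k * maxOp L μ (u k) x := by
  refine iSup₂_le fun I hI => ?_
  calc (∫⁻ y in I, ∑' k, a k * u k y ∂μ) / μ I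
      = ∑' k, a k * ((∫⁻ y in I, u k y ∂μ) / μ I) := by
        rw [lintegral_tsum fun k => ((hu k).const_mul _).aemeasurable]
        simp only [lintegral_const_mul _ (hu _), div_eq_mul_inv, ← ENNReal.tsum_mul_right,
          mul_assoc]
    _ ≤ ∑' k, a k * maxOp L μ (u k) x := by
        gcongr with k
        exact setLIntegral_div_le_maxOp μ (u k) hI.1 hI.2

variable {L μ}

lemma mul_measure_sUnion_le_lintegral {f : X → ℝ≥0∞} {t : ℝ≥0∞} {B : Set (Set X)} {m : ℤ}
    (hB : ∀ I ∈ B, ∃ n ≥ m, I ∈ L.gen n) (hBt : ∀ I ∈ B, t * μ I ≤ ∫⁻ x in I, f x ∂μ) :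
    t * μ (⋃₀ B) ≤ ∫⁻ x, f x ∂μ := by
  have hBL : B ⊆ L.sets := fun I hI =>
    let ⟨n, _, hn⟩ := hB I hI
    mem_iUnion.mpr ⟨n, hn⟩
  set T : Set (Set X) := {I | Maximal (· ∈ B) I}
  have hTB : T ⊆ B := fun I hI => hI.prop
  have hTc : T.Countable := L.countable_sets.mono (hTB.trans hBL)
  have hTm : ∀ I ∈ T, MeasurableSet I := fun I hI => L.measurableSet_of_mem_sets (hBL (hTB hI))
  have hTd : T.PairwiseDisjoint id := L.pairwiseDisjoint_maximal hBL
  calc t * μ (⋃₀ B) = ∑' I : T, t * μ I := by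
        rw [← L.sUnion_maximal_eq hB, measure_sUnion hTc hTd hTm, ENNReal.tsum_mul_left]
    _ ≤ ∑' I : T, ∫⁻ x in (I : Set X), f x ∂μ :=
        ENNReal.tsum_le_tsum fun I => hBt I (hTB I.2)
    _ = ∫⁻ x in ⋃ I ∈ T, I, f x ∂μ := (lintegral_biUnion hTc hTm hTd f).symm
    _ ≤ ∫⁻ x, f x ∂μ := setLIntegral_le_lintegral _ _

variable (L μ)

lemma mul_meas_lt_maxOp_le (f : X → ℝ≥0∞) (t : ℝ≥0∞) :
    t * μ {x | t < maxOp L μ f x} ≤ ∫⁻ x, f x ∂μ := by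
  -- Maximal sets exist only among generations bounded below, so the whole lattice is exhausted.
  let B (m : ℕ) : Set (Set X) :=
    {I | (∃ n ≥ -(m : ℤ), I ∈ L.gen n) ∧ t < (∫⁻ y in I, f y ∂μ) / μ I}
  have hmono : Monotone fun m => ⋃₀ B m := fun m m' hmm' =>
    sUnion_subset_sUnion fun I ⟨⟨n, hn, hI⟩, hlt⟩ => ⟨⟨n, by omega, hI⟩, hlt⟩
  have hsub : {x | t < maxOp L μ f x} ⊆ ⋃ m, ⋃₀ B m := by
    rw [setOf_lt_maxOp]
    rintro x ⟨I, ⟨hI, hlt⟩, hxI⟩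
    obtain ⟨n, hn⟩ := mem_iUnion.mp hI
    exact mem_iUnion.mpr ⟨n.natAbs, I, ⟨⟨n, by omega, hn⟩, hlt⟩, hxI⟩
  calc t * μ {x | t < maxOp L μ f x} ≤ t * μ (⋃ m, ⋃₀ B m) := by gcongr
    _ = ⨆ m, t * μ (⋃₀ B m) := by rw [hmono.measure_iUnion, ENNReal.mul_iSup]
    _ ≤ ∫⁻ x, f x ∂μ := iSup_le fun m =>
        mul_measure_sUnion_le_lintegral (fun I hI => hI.1) fun I hI =>
          ENNReal.mul_le_of_le_div hI.2.le

lemma mul_meas_lt_maxOp_le_setLIntegral {f : X → ℝ≥0∞} (hf : Measurable f) (t : ℝ≥0∞) :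
    t * μ {x | t < maxOp L μ f x} ≤ ∫⁻ x in {x | t < 2 * f x}, 2 * f x ∂μ := by
  set A : Set X := {x | t < 2 * f x}
  have hA : MeasurableSet A := measurableSet_lt measurable_const (hf.const_mul 2)
  have hsplit (x : X) : f x ≤ A.indicator f x + t / 2 := by
    by_cases hx : x ∈ A
    · rw [indicator_of_mem hx]
      exact le_self_add
    · rw [indicator_of_notMem hx, zero_add,
        ENNReal.le_div_iff_mul_le (.inl two_ne_zero) (.inl ENNReal.ofNat_ne_top), mul_comm]
      exact not_lt.mp hx
  have hsub : {x | t < maxOp L μ f x} ⊆ {x | t / 2 < maxOp L μ (A.indicator f) x} := by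
    intro x (hx : t < maxOp L μ f x)
    refine (ENNReal.add_lt_add_iff_right (a := t / 2) ?_).mp ?_
    · exact (ENNReal.half_le_self.trans_lt hx).ne_top
    · rw [ENNReal.add_halves]
      exact hx.trans_le (maxOp_le_maxOp_add_const L μ hsplit x)
  calc t * μ {x | t < maxOp L μ f x}
      ≤ 2 * (t / 2 * μ {x | t / 2 < maxOp L μ (A.indicator f) x}) := by
        rw [← mul_assoc, ENNReal.mul_div_cancel two_ne_zero ENNReal.ofNat_ne_top]
        gcongr
    _ ≤ 2 * ∫⁻ x, A.indicator f x ∂μ := by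
        gcongr
        exact mul_meas_lt_maxOp_le L μ _ _
    _ = ∫⁻ x in A, 2 * f x ∂μ := by rw [lintegral_indicator hA, lintegral_const_mul _ hf]

lemma lintegral_maxOp_rpow_le {f : X → ℝ≥0∞} (hf : Measurable f) {r : ℝ} (hr : 1 < r) :
    ∫⁻ x, maxOp L μ f x ^ r ∂μ ≤ ENNReal.ofReal (r / (r - 1)) * ∫⁻ x, (2 * f x) ^ r ∂μ := by
  have hf₂ : Measurable fun x => 2 * f x := hf.const_mul 2
  have hpow (y : ℝ≥0∞) : y ^ r = y * y ^ (r - 1) := by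
    nth_rw 1 [← add_sub_cancel 1 r]
    rw [ENNReal.rpow_add_of_nonneg _ _ zero_le_one (sub_nonneg.mpr hr.le), ENNReal.rpow_one]
  simp only [hpow (2 * _)]
  exact lintegral_rpow_le_of_mul_meas_lt_le (measurable_maxOp L μ f).aemeasurable hf₂ hf₂
    (mul_meas_lt_maxOp_le_setLIntegral L μ hf) hr

lemma eLpNorm'_maxOp_le {f : X → ℝ≥0∞} (hf : Measurable f) {r : ℝ} (hr : 1 < r) :
    eLpNorm' (maxOp L μ f) r μ ≤
      ENNReal.ofReal (r / (r - 1)) ^ (1 / r) * 2 * eLpNorm' f r μ := by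
  have hr₀ : 0 < r := by linarith
  calc eLpNorm' (maxOp L μ f) r μ
      ≤ (ENNReal.ofReal (r / (r - 1)) * ∫⁻ x, (2 * f x) ^ r ∂μ) ^ (1 / r) := by
        simp only [eLpNorm', enorm_eq_self]
        gcongr
        exact lintegral_maxOp_rpow_le L μ hf hr
    _ = ENNReal.ofReal (r / (r - 1)) ^ (1 / r) * eLpNorm' (fun x => 2 * f x) r μ := by
        simp only [eLpNorm', enorm_eq_self]
        exact ENNReal.mul_rpow_of_nonneg _ _ (by positivity)
    _ = ENNReal.ofReal (r / (r - 1)) ^ (1 / r) * 2 * eLpNorm' f r μ := by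
        rw [eLpNorm'_const_mul hr₀ 2 hf, mul_assoc]

variable {L μ}

lemma setLIntegral_le_mul_iInf_of_maxOp_le {f : X → ℝ≥0∞} {K : ℝ≥0∞} (hK : K ≠ 0) (hK' : K ≠ ∞)
    (hf : ∀ x, maxOp L μ f x ≤ K * f x) {I : Set X} (hI : I ∈ L.sets) (hμI : μ I ≠ ∞) :
    ∫⁻ x in I, f x ∂μ ≤ K * (⨅ x ∈ I, f x) * μ I := by
  rcases eq_or_ne (μ I) 0 with h₀ | h₀
  · rw [setLIntegral_measure_zero I f h₀]
    exact zero_le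
  rw [← ENNReal.div_le_iff_le_mul (.inl h₀) (.inl hμI), ← ENNReal.inv_mul_le_iff hK hK']
  refine le_iInf₂ fun x hx => (ENNReal.inv_mul_le_iff hK hK').mpr ?_
  exact (setLIntegral_div_le_maxOp μ f hI hx).trans (hf x)

end MaximalOperator

section Iteration

variable {X : Type*} {T : (X → ℝ≥0∞) → X → ℝ≥0∞} {c : ℝ≥0∞} {h : X → ℝ≥0∞}

/-- The series `∑ cᵏ Tᵏ h` of Rubio de Francia's algorithm; for `c` below the inverse norm of a
sublinear operator `T`, it is a majorant of `h` on which `T` is bounded pointwise. -/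
noncomputable def rubioSeries (T : (X → ℝ≥0∞) → X → ℝ≥0∞) (c : ℝ≥0∞) (h : X → ℝ≥0∞) (x : X) :
    ℝ≥0∞ :=
  ∑' k : ℕ, c ^ k * T^[k] h x

lemma le_rubioSeries (x : X) : h x ≤ rubioSeries T c h x :=
  calc h x = c ^ 0 * T^[0] h x := by rw [pow_zero, one_mul, Function.iterate_zero_apply]
    _ ≤ rubioSeries T c h x := ENNReal.le_tsum (f := fun k : ℕ => c ^ k * T^[k] h x) 0

variable [MeasurableSpace X]

lemma measurable_iterate_apply (hT : ∀ g, Measurable g → Measurable (T g)) (hh : Measurable h)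
    (k : ℕ) : Measurable (T^[k] h) :=
  Function.Iterate.rec (fun g => Measurable g) hh (fun g => hT g) k

lemma measurable_rubioSeries (hT : ∀ g, Measurable g → Measurable (T g)) (hh : Measurable h) :
    Measurable (rubioSeries T c h) :=
  .tsum fun k => (measurable_iterate_apply hT hh k).const_mul _

lemma mul_apply_rubioSeries_le (hT : ∀ g, Measurable g → Measurable (T g))
    (hsub : ∀ (a : ℕ → ℝ≥0∞) (u : ℕ → X → ℝ≥0∞), (∀ k, Measurable (u k)) →
      ∀ x, T (fun y => ∑' k, a k * u k y) x ≤ ∑' k, a k * T (u k) x)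
    (hh : Measurable h) (x : X) : c * T (rubioSeries T c h) x ≤ rubioSeries T c h x := by
  calc c * T (rubioSeries T c h) x ≤ c * ∑' k : ℕ, c ^ k * T (T^[k] h) x := by
        gcongr
        exact hsub _ _ (measurable_iterate_apply hT hh) x
    _ = ∑' k : ℕ, c ^ (k + 1) * T^[k + 1] h x := by
        simp only [← ENNReal.tsum_mul_left, Function.iterate_succ_apply', pow_succ', mul_assoc]
    _ ≤ rubioSeries T c h x :=
        ENNReal.tsum_comp_le_tsum_of_injective (add_left_injective 1)
          fun k => c ^ k * T^[k] h x

variable {μ : Measure X} {C : ℝ≥0∞} {r : ℝ}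

lemma eLpNorm'_iterate_le (hT : ∀ g, Measurable g → Measurable (T g))
    (hC : ∀ g, Measurable g → eLpNorm' (T g) r μ ≤ C * eLpNorm' g r μ) (hh : Measurable h)
    (k : ℕ) : eLpNorm' (T^[k] h) r μ ≤ C ^ k * eLpNorm' h r μ := by
  induction k with
  | zero => simp only [Function.iterate_zero, id_eq, pow_zero, one_mul, le_refl]
  | succ k ih =>
    calc eLpNorm' (T^[k + 1] h) r μ ≤ C * eLpNorm' (T^[k] h) r μ := by
          rw [Function.iterate_succ_apply']
          exact hC _ (measurable_iterate_apply hT hh k)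
      _ ≤ C * (C ^ k * eLpNorm' h r μ) := by gcongr
      _ = C ^ (k + 1) * eLpNorm' h r μ := by rw [pow_succ', mul_assoc]

lemma eLpNorm'_rubioSeries_le (hr : 1 ≤ r) (hT : ∀ g, Measurable g → Measurable (T g))
    (hC : ∀ g, Measurable g → eLpNorm' (T g) r μ ≤ C * eLpNorm' g r μ) (hh : Measurable h) :
    eLpNorm' (rubioSeries T c h) r μ ≤ (1 - c * C)⁻¹ * eLpNorm' h r μ := by
  have hmeas := measurable_iterate_apply hT hh
  calc eLpNorm' (rubioSeries T c h) r μ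
      ≤ ∑' k : ℕ, eLpNorm' (fun x => c ^ k * T^[k] h x) r μ :=
        eLpNorm'_tsum_le hr fun k => (hmeas k).const_mul _
    _ = ∑' k : ℕ, c ^ k * eLpNorm' (T^[k] h) r μ := by
        simp only [eLpNorm'_const_mul (by linarith : 0 < r) _ (hmeas _)]
    _ ≤ ∑' k : ℕ, c ^ k * (C ^ k * eLpNorm' h r μ) := by
        gcongr with k
        exact eLpNorm'_iterate_le hT hC hh k
    _ = (1 - c * C)⁻¹ * eLpNorm' h r μ := by
        simp only [← mul_assoc, ← mul_pow, ENNReal.tsum_mul_right, ENNReal.tsum_geometric]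

lemma exists_majorant_apply_le (hr : 1 ≤ r) (hC₀ : C ≠ 0) (hC_top : C ≠ ∞)
    (hT : ∀ g, Measurable g → Measurable (T g))
    (hC : ∀ g, Measurable g → eLpNorm' (T g) r μ ≤ C * eLpNorm' g r μ)
    (hsub : ∀ (a : ℕ → ℝ≥0∞) (u : ℕ → X → ℝ≥0∞), (∀ k, Measurable (u k)) →
      ∀ x, T (fun y => ∑' k, a k * u k y) x ≤ ∑' k, a k * T (u k) x)
    (hh : Measurable h) :
    ∃ G : X → ℝ≥0∞, Measurable G ∧ (∀ x, h x ≤ G x) ∧ eLpNorm' G r μ ≤ 2 * eLpNorm' h r μ ∧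
      ∀ x, T G x ≤ 2 * C * G x := by
  have hhalf : (1 - (2 * C)⁻¹ * C)⁻¹ = 2 := by
    rw [ENNReal.mul_inv (.inl two_ne_zero) (.inl ENNReal.ofNat_ne_top), mul_assoc,
      ENNReal.inv_mul_cancel hC₀ hC_top, mul_one, ENNReal.one_sub_inv_two, inv_inv]
  refine ⟨rubioSeries T (2 * C)⁻¹ h, measurable_rubioSeries hT hh, le_rubioSeries, ?_, fun x => ?_⟩
  · exact (eLpNorm'_rubioSeries_le hr hT hC hh).trans_eq (by rw [hhalf])
  · exact (ENNReal.inv_mul_le_iff (mul_ne_zero two_ne_zero hC₀)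
      (ENNReal.mul_ne_top ENNReal.ofNat_ne_top hC_top)).mp (mul_apply_rubioSeries_le hT hsub hh x)

end Iteration

lemma exists_majorant_maxOp_le {r : ℝ} (hr : 1 < r) :
    ∃ K : ℝ≥0∞, K ≠ 0 ∧ K ≠ ∞ ∧
      ∀ (X : Type*) [MeasurableSpace X] (L : LatticeFamily X) (μ : Measure X) (h : X → ℝ≥0∞),
        Measurable h → ∃ G : X → ℝ≥0∞, Measurable G ∧ (∀ x, h x ≤ G x) ∧
          eLpNorm' G r μ ≤ 2 * eLpNorm' h r μ ∧ ∀ x, maxOp L μ G x ≤ K * G x := by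
  have hpos : 0 < ENNReal.ofReal (r / (r - 1)) :=
    ENNReal.ofReal_pos.mpr (div_pos (by linarith) (by linarith))
  obtain ⟨C, hC₀, hC_top, hC⟩ : ∃ C : ℝ≥0∞, C ≠ 0 ∧ C ≠ ∞ ∧
      C = ENNReal.ofReal (r / (r - 1)) ^ (1 / r) * 2 :=
    ⟨_, mul_ne_zero (ENNReal.rpow_pos hpos ENNReal.ofReal_ne_top).ne' two_ne_zero,
      ENNReal.mul_ne_top (ENNReal.rpow_ne_top_of_nonneg (by positivity) ENNReal.ofReal_ne_top)
        ENNReal.ofNat_ne_top, rfl⟩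
  refine ⟨2 * C, mul_ne_zero two_ne_zero hC₀, ENNReal.mul_ne_top ENNReal.ofNat_ne_top hC_top,
    fun X _ L μ h hh => ?_⟩
  exact exists_majorant_apply_le hr.le hC₀ hC_top (fun g _ => measurable_maxOp L μ g)
    (fun g hg => hC ▸ eLpNorm'_maxOp_le L μ hg hr)
    (fun a _ hu => maxOp_tsum_mul_le L μ a hu) hh

theorem rubio_de_francia_general {p q : ℝ} (hq : 0 < q) (hqp : q < p) :
    ∃ K : ℝ≥0∞, 0 < K ∧ K < ∞ ∧
      ∀ (X : Type*) [MeasurableSpace X] (L : LatticeFamily X) (μ : Measure X),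
        (∀ I ∈ L.sets, μ I < ∞) →
        ∀ f : X → ℝ≥0∞, Measurable f →
          ∃ F : X → ℝ≥0∞, Measurable F ∧
            (∀ x, f x ≤ F x) ∧
            (∫⁻ x, f x ^ p ∂μ) ^ (1 / p) ≤ (∫⁻ x, F x ^ p ∂μ) ^ (1 / p) ∧
            (∫⁻ x, F x ^ p ∂μ) ^ (1 / p)
              ≤ (2 : ℝ≥0∞) ^ (1 / q) * (∫⁻ x, f x ^ p ∂μ) ^ (1 / p) ∧
            ∀ I ∈ L.sets, ∫⁻ x in I, F x ^ q ∂μ ≤ K * (⨅ x ∈ I, F x ^ q) * μ I := by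
  have hp : 0 < p := hq.trans hqp
  obtain ⟨K, hK₀, hK, hmaj⟩ := exists_majorant_maxOp_le ((one_lt_div hq).mpr hqp)
  refine ⟨K, pos_iff_ne_zero.mpr hK₀, hK.lt_top, fun X _ L μ hμ f hf => ?_⟩
  obtain ⟨G, hG, hfG, hGnorm, hMG⟩ := hmaj X L μ (fun x => f x ^ q) (hf.pow_const q)
  have hfF (x : X) : f x ≤ G x ^ q⁻¹ := (ENNReal.le_rpow_inv_iff hq).mpr (hfG x)
  have hFq (x : X) : (G x ^ q⁻¹) ^ q = G x := ENNReal.rpow_inv_rpow hq.ne' _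
  have hnorm (g : X → ℝ≥0∞) :
      (∫⁻ x, g x ^ p ∂μ) ^ (1 / p) = eLpNorm' (fun x => g x ^ q) (p / q) μ ^ q⁻¹ :=
    eLpNorm'_eq_eLpNorm'_rpow_div hq p g
  refine ⟨fun x => G x ^ q⁻¹, hG.pow_const _, hfF, ?_, ?_, fun I hI => ?_⟩
  · gcongr with x
    exact hfF x
  · rw [hnorm, hnorm, one_div, ← ENNReal.mul_rpow_of_nonneg _ _ (by positivity)]
    simp only [hFq]
    gcongr
  · simp only [hFq]
    exact setLIntegral_le_mul_iInf_of_maxOp_le hK₀ hK hMG hI (hμ I hI).ne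

/-- **Rubio de Francia algorithm.** For `1 ≤ q < p < ∞` there is a constant
`K = K(p,q)` such that for every nonnegative `f ∈ L^p(μ)` there exists `F ∈ L^p(μ)` with
`f ≤ F`, `‖f‖_p ≤ ‖F‖_p ≤ 2^{1/q} ‖f‖_p`, and
`μ(I)⁻¹ ∫_I F^q dμ ≤ K · inf_{x ∈ I} F(x)^q` for every `I ∈ 𝓛`. -/
theorem rubio_de_francia (p q : ℝ) (hq : 1 ≤ q) (hqp : q < p) :
    ∃ K : ℝ≥0∞, 0 < K ∧ K < ∞ ∧
      ∀ (X : Type) [MeasurableSpace X] (L : LatticeFamily X) (μ : Measure X),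
        (∀ I ∈ L.sets, 0 < μ I ∧ μ I < ∞) →
        ∀ f : X → ℝ≥0∞, Measurable f → ∫⁻ x, f x ^ p ∂μ < ∞ →
          ∃ F : X → ℝ≥0∞, Measurable F ∧
            (∀ x, f x ≤ F x) ∧
            (∫⁻ x, f x ^ p ∂μ) ^ (1 / p) ≤ (∫⁻ x, F x ^ p ∂μ) ^ (1 / p) ∧
            (∫⁻ x, F x ^ p ∂μ) ^ (1 / p)
              ≤ (2 : ℝ≥0∞) ^ (1 / q) * (∫⁻ x, f x ^ p ∂μ) ^ (1 / p) ∧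
            ∀ I ∈ L.sets, (∫⁻ x in I, F x ^ q ∂μ) / μ I ≤ K * ⨅ x ∈ I, F x ^ q := by
  obtain ⟨K, hK₀, hK, hmain⟩ := rubio_de_francia_general (by linarith : 0 < q) hqp
  refine ⟨K, hK₀, hK, fun X _ L μ hμ f hf _ => ?_⟩
  obtain ⟨F, hF, hfF, hle, hge, hA⟩ := hmain X L μ (fun I hI => (hμ I hI).2) f hf
  exact ⟨F, hF, hfF, hle, hge, fun I hI => ENNReal.div_le_of_le_mul (hA I hI)⟩
end
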